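/- (Algebraic flatness of Hecke algebras of polygonal Fuchsian groups; Etingof–Rains.) Let r ≥ 3 and let m_1,…,m_r be integers with m_j ≥ 2. Let R = ℂ[q_{jk}^{±1} : 1 ≤ j ≤ r, 1 ≤ k ≤ m_j] be the Laurent polynomial ring in the variables q_{jk}, and let H be the quotient of the free associative R-algebra on generators c_1,…,c_r by the two-sided ideal generated by the relations ∏_{k=1}^{m_j} (c_j − e^{2πik/m_j} q_{jk}) = 0 for each j = 1,…,r, and c_1 c_2 ⋯ c_r = 1 (each c_j is automatically invertible in H since the q_{jk} are units). Then H is free as a left R-module if and only if Σ_{j=1}^r (1 − 1/m_j) ≥ 2. -/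

import Mathlib

noncomputable section

/-- The base ring: the Laurent polynomial ring `R = ℂ[q_{jk}^{±1}]` in the variables
`q_{jk}`, `1 ≤ j ≤ r`, `1 ≤ k ≤ m_j`, realized as the monoid algebra of `ℂ` over the free
abelian group on the index set `Σ_j Fin (m_j)`. -/
abbrev HeckeBase (r : ℕ) (m : Fin r → ℕ) : Type :=
  AddMonoidAlgebra ℂ ((Σ j : Fin r, Fin (m j)) →₀ ℤ)

/-- The Laurent variable `q_{jk}`. -/
def qVar {r : ℕ} {m : Fin r → ℕ} (j : Fin r) (k : Fin (m j)) : HeckeBase r m :=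
  AddMonoidAlgebra.single (Finsupp.single ⟨j, k⟩ 1) 1

/-- The defining relations of the Hecke algebra `H_τ(Γ(m₁,…,m_r))` of the polygonal
Fuchsian group: for each `j`, `∏_{k=1}^{m_j} (c_j − e^{2πik/m_j} q_{jk}) = 0`, and
`c₁ c₂ ⋯ c_r = 1`, as relations on the free associative `R`-algebra on `c₁,…,c_r`. -/
def heckeRel (r : ℕ) (m : Fin r → ℕ) :
    FreeAlgebra (HeckeBase r m) (Fin r) → FreeAlgebra (HeckeBase r m) (Fin r) → Prop :=
  fun a b =>
    (∃ j : Fin r,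
      a = (List.ofFn fun k : Fin (m j) =>
            FreeAlgebra.ι (HeckeBase r m) j
              - algebraMap (HeckeBase r m) (FreeAlgebra (HeckeBase r m) (Fin r))
                  (Complex.exp (2 * Real.pi * Complex.I * ((k : ℕ) + 1) / (m j)) •
                    qVar j k)).prod
        ∧ b = 0)
    ∨ (a = (List.ofFn fun j : Fin r => FreeAlgebra.ι (HeckeBase r m) j).prod ∧ b = 1)

namespace HF

/-- alternating letter -/
def al {α : Type*} (i j : α) (k : ℕ) : α := if Even k then i else j

theorem al_zero {α : Type*} (i j : α) : al i j 0 = i := by simp [al]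
theorem al_succ {α : Type*} (i j : α) (k : ℕ) : al i j (k+1) = al j i k := by
  simp only [al, Nat.even_add_one]; by_cases h : Even k <;> simp [h]
theorem al_cases {α : Type*} (i j l : α) (k : ℕ) (h : l = i ∨ l = j) :
    l = al i j k ∨ l = al j i k := by
  unfold al; split_ifs <;> tauto
theorem al_mem {α : Type*} (i j : α) (k : ℕ) : al i j k = i ∨ al i j k = j := by
  unfold al; split_ifs <;> tauto
theorem al_ne {α : Type*} {i j : α} (h : i ≠ j) (k : ℕ) : al i j k ≠ al j i k := by
  unfold al; split_ifs
  · exact h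
  · exact h.symm

/-- alternating chain of actions, `k` steps, first letter `i` -/
def ch {I W : Type*} (act : I → W → W) (i j : I) : ℕ → W → W
  | 0, w => w
  | k+1, w => act (al i j k) (ch act i j k w)

section game
variable {I : Type} 

def fire (C : I → I → ℝ) (i : I) (p : I → ℝ) : I → ℝ := fun l => p l - C i l * p i

inductive Reach (C : I → I → ℝ) : ℕ → (I → ℝ) → Prop
  | zero : Reach C 0 (fun _ => 1)
  | succ {n : ℕ} {p : I → ℝ} (i : I) : Reach C n p → 0 < p i → Reach C (n+1) (fire C i p)

def PairOK (c : ℝ) (mu : ℕ) (f : ℕ → ℝ) : Prop :=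
  f 0 = 0 ∧ f 1 = 1 ∧ (∀ n, f (n+2) = -c * f (n+1) - f n) ∧
    (∀ n, 1 ≤ n → (mu = 0 ∨ n < mu) → 1 ≤ f n) ∧
    (mu ≠ 0 → f mu = 0 ∧ f (mu - 1) = 1 ∧ 2 ≤ mu ∧ c^2 ≠ 4)

structure GameOK (C : I → I → ℝ) (mu : I → I → ℕ) : Prop where
  two : ∀ i, C i i = 2
  symm : ∀ i j, C i j = C j i
  musymm : ∀ i j, mu i j = mu j i
  pair : ∀ i j, i ≠ j → ∃ f, PairOK (C i j) (mu i j) f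

variable {C : I → I → ℝ} {mu : I → I → ℕ}

theorem fire_self (hG : GameOK C mu) (i : I) (p : I → ℝ) : fire C i p i = - p i := by
  simp only [fire, hG.two]; ring

theorem fire_fire (hG : GameOK C mu) (i : I) (p : I → ℝ) : fire C i (fire C i p) = p := by
  funext l; simp only [fire, hG.two]; ring

theorem C_al (hG : GameOK C mu) (i j : I) (k : ℕ) : C (al i j (k+1)) (al i j k) = C i j := by
  rw [al_succ]; unfold al; split_ifs
  · exact hG.symm _ _
  · rfl

theorem ch_val (hG : GameOK C mu) {i j : I} {f : ℕ → ℝ}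
    (hf : PairOK (C i j) (mu i j) f) (p : I → ℝ) : ∀ k,
    ch (fire C) i j k p (al i j k) = f (k+1) * p i + f k * p j ∧
    ch (fire C) i j (k+1) p (al i j k) = -(f (k+1) * p i + f k * p j) := by
  obtain ⟨f0, f1, frec, -, -⟩ := hf
  have key : ∀ k, ch (fire C) i j k p (al i j k) = f (k+1) * p i + f k * p j →
      ch (fire C) i j (k+1) p (al i j k) = -(f (k+1) * p i + f k * p j) := by
    intro k h
    rw [← h]; exact fire_self hG _ _
  have main : ∀ k, ch (fire C) i j k p (al i j k) = f (k+1) * p i + f k * p j ∧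
      ch (fire C) i j (k+1) p (al i j (k+1)) = f (k+2) * p i + f (k+1) * p j := by
    intro k
    induction k with
    | zero =>
      have h0 : ch (fire C) i j 0 p (al i j 0) = f (0+1) * p i + f 0 * p j := by
        simp [ch, al_zero, f0, f1]
      refine ⟨h0, ?_⟩
      simp only [ch, al_succ, al_zero, fire, frec 0, zero_add, f0, f1]; ring
    | succ k ih =>
      refine ⟨ih.2, ?_⟩
      have h1 := key k ih.1
      have : al i j (k+1+1) = al i j k := by rw [al_succ, al_succ]
      rw [this, ch, fire, h1, C_al hG, ih.2, frec (k+1)]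
      linear_combination (-(p j)) * frec k
  exact fun k => ⟨(main k).1, key k (main k).1⟩

theorem Vpos {c : ℝ} {mu : ℕ} {f : ℕ → ℝ} (hf : PairOK c mu f) {a b : ℝ} (ha : 1 ≤ a)
    (hb : 1 ≤ b) (k : ℕ) (hk : mu = 0 ∨ k < mu) : 1 ≤ f (k+1) * a + f k * b := by
  obtain ⟨f0, f1, frec, fpos, ftop⟩ := hf
  have hk0 : 0 ≤ f k := by
    rcases Nat.eq_zero_or_pos k with rfl | h
    · rw [f0]
    · linarith [fpos k h hk]
  by_cases h : mu = 0 ∨ k + 1 < mu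
  · have := fpos (k+1) (by omega) h
    nlinarith
  · push Not at h
    have hm : mu = k + 1 := by omega
    obtain ⟨t1, t2, -, -⟩ := ftop h.1
    rw [hm] at t1 t2
    simp at t2
    rw [t1, t2]; linarith

theorem Vtop {c : ℝ} {mu : ℕ} {f : ℕ → ℝ} (hf : PairOK c mu f) (h0 : mu ≠ 0) (a b : ℝ) :
    f (mu+1) * a + f mu * b = -a := by
  obtain ⟨f0, f1, frec, fpos, ftop⟩ := hf
  obtain ⟨t1, t2, t3, -⟩ := ftop h0
  have := frec (mu - 1)
  rw [show mu - 1 + 2 = mu + 1 by omega, show mu - 1 + 1 = mu by omega, t1, t2] at this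
  rw [this, t1]; ring

theorem ch_amount (i j : I) (p : I → ℝ) (k : ℕ) :
    ∃ A B : ℝ, ∀ l, ch (fire C) i j k p l = p l - C i l * A - C j l * B := by
  induction k with
  | zero => exact ⟨0, 0, fun l => by simp [ch]⟩
  | succ k ih =>
    obtain ⟨A, B, h⟩ := ih
    rcases al_mem i j k with h' | h'
    · refine ⟨A + ch (fire C) i j k p i, B, fun l => ?_⟩
      rw [ch, h', fire, h l]; ring
    · refine ⟨A, B + ch (fire C) i j k p j, fun l => ?_⟩
      rw [ch, h', fire, h l]; ring

theorem polygon (hG : GameOK C mu) {i j : I} (hij : i ≠ j) (h0 : mu i j ≠ 0) (p : I → ℝ) :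
    ch (fire C) i j (mu i j) p = ch (fire C) j i (mu i j) p := by
  obtain ⟨f, hf⟩ := hG.pair i j hij
  obtain ⟨g, hg⟩ := hG.pair j i hij.symm
  have e1 : ∀ (i j : I) (f : ℕ → ℝ), PairOK (C i j) (mu i j) f → mu i j ≠ 0 →
      ch (fire C) i j (mu i j) p (al i j (mu i j)) = - p i ∧
      ch (fire C) i j (mu i j) p (al j i (mu i j)) = - p j := by
    intro i j f hf h0
    refine ⟨by rw [(ch_val hG hf p _).1, Vtop hf h0], ?_⟩
    obtain ⟨f0, f1, frec, fpos, ftop⟩ := id hf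
    obtain ⟨t1, t2, t3, -⟩ := ftop h0
    have := (ch_val hG hf p (mu i j - 1)).2
    rw [show mu i j - 1 + 1 = mu i j by omega, t1, t2] at this
    have e : al j i (mu i j) = al i j (mu i j - 1) := by
      conv_lhs => rw [show mu i j = mu i j - 1 + 1 by omega]
      rw [al_succ]
    rw [e, this]; ring
  obtain ⟨a1, a2⟩ := e1 i j f hf h0
  obtain ⟨b1, b2⟩ := e1 j i g hg (by rwa [hG.musymm])
  rw [hG.musymm j i] at b1 b2
  obtain ⟨A, B, hA⟩ := ch_amount (C := C) i j p (mu i j)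
  obtain ⟨B', A', hB⟩ := ch_amount (C := C) j i p (mu i j)
  have q : ch (fire C) i j (mu i j) p i = ch (fire C) j i (mu i j) p i ∧
      ch (fire C) i j (mu i j) p j = ch (fire C) j i (mu i j) p j := by
    have c1 := al_cases i j i (mu i j) (Or.inl rfl)
    have c2 := al_cases i j j (mu i j) (Or.inr rfl)
    have n := a1.trans b2.symm
    have n' := a2.trans b1.symm
    constructor
    · rcases c1 with h | h
      · rw [← h] at n; exact n
      · rw [← h] at n'; exact n'
    · rcases c2 with h | h
      · rw [← h] at n; exact n
      · rw [← h] at n'; exact n'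
  have c4 : C i j ^ 2 ≠ 4 := (hf.2.2.2.2 h0).2.2.2
  rw [hA, hB, hA, hB, hG.two, hG.two, hG.symm j i] at q
  have d1 : 2 * (A - A') = - C i j * (B - B') := by linarith [q.1]
  have d2 : 2 * (B - B') = - C i j * (A - A') := by linarith [q.2]
  have d3 : (C i j ^ 2 - 4) * (A - A') = 0 := by
    linear_combination (-2) * d1 + (C i j) * d2
  have d4 : (C i j ^ 2 - 4) * (B - B') = 0 := by
    linear_combination (-2) * d2 + (C i j) * d1
  have h4 : C i j ^ 2 - 4 ≠ 0 := sub_ne_zero.mpr c4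
  have A0 : A = A' := by
    have := (mul_eq_zero.mp d3).resolve_left h4; linarith
  have B0 : B = B' := by
    have := (mul_eq_zero.mp d4).resolve_left h4; linarith
  funext l
  rw [hA, hB, A0, B0]; ring

theorem climb (hG : GameOK C mu) {i j : I} (hij : i ≠ j) {n : ℕ} {d : I → ℝ}
    (hd : Reach C n d) (hi : 1 ≤ d i) (hj : 1 ≤ d j) : ∀ k, (mu i j = 0 ∨ k ≤ mu i j) →
    Reach C (n+k) (ch (fire C) i j k d) := by
  obtain ⟨f, hf⟩ := hG.pair i j hij
  intro k
  induction k with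
  | zero => intro; exact hd
  | succ k ih =>
    intro hk
    refine Reach.succ _ (ih (by omega)) ?_
    rw [(ch_val hG hf d k).1]
    linarith [Vpos hf hi hj k (by omega)]

/-- `p` lies on an `i,j` chain going up from a doubly positive position -/
def OnCh (C : I → I → ℝ) (mu : I → I → ℕ) (n : ℕ) (p : I → ℝ) (i j : I) (k : ℕ) : Prop :=
  ∃ x y n0 d, ((x = i ∧ y = j) ∨ (x = j ∧ y = i)) ∧ n = n0 + k ∧ Reach C n0 d ∧
    1 ≤ d x ∧ 1 ≤ d y ∧ p = ch (fire C) x y k d ∧ (mu x y = 0 ∨ k ≤ mu x y)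

theorem OnCh.ext (hG : GameOK C mu) {i j : I} (hij : i ≠ j) {n : ℕ} {p : I → ℝ} {k : ℕ}
    (h : OnCh C mu n p i j k) {l : I} (hl : l = i ∨ l = j) (hp : 0 < p l) :
    OnCh C mu (n+1) (fire C l p) i j (k+1) := by
  obtain ⟨x, y, n0, d, hxy, hn, hd, hx, hy, rfl, hk⟩ := h
  have hne : x ≠ y := by rcases hxy with ⟨rfl, rfl⟩ | ⟨rfl, rfl⟩; exacts [hij, hij.symm]
  have hl' : l = x ∨ l = y := by rcases hxy with ⟨rfl, rfl⟩ | ⟨rfl, rfl⟩ <;> tauto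
  obtain ⟨f, hf⟩ := hG.pair x y hne
  cases k with
  | zero =>
    rcases hl' with rfl | rfl
    · refine ⟨l, y, n0, d, hxy, by omega, hd, hx, hy, by simp [ch, al_zero], ?_⟩
      have := hf.2.2.2.2
      by_cases h0 : mu l y = 0
      · exact Or.inl h0
      · have := this h0; omega
    · refine ⟨l, x, n0, d, by tauto, by omega, hd, hy, hx, by simp [ch, al_zero], ?_⟩
      have := hf.2.2.2.2
      rw [hG.musymm l x]
      by_cases h0 : mu x l = 0
      · exact Or.inl h0
      · have := this h0; omega
  | succ k =>
    rcases al_cases x y l k hl' with h | h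
    · exfalso
      rw [h, (ch_val hG hf d k).2] at hp
      linarith [Vpos hf hx hy k (by omega)]
    · rw [← al_succ] at h
      refine ⟨x, y, n0, d, hxy, by omega, hd, hx, hy, by rw [h]; rfl, ?_⟩
      by_contra hcon
      have hm : mu x y = k + 1 := by omega
      rw [h, (ch_val hG hf d (k+1)).1, ← hm, Vtop hf (by omega)] at hp
      linarith

/-- values on a chain -/
theorem OnCh.val (hG : GameOK C mu) {i j : I} (hij : i ≠ j) {n : ℕ} {p : I → ℝ} {k : ℕ}
    (h : OnCh C mu n p i j k) : 1 ≤ |p i| ∧ (p i < 0 → ∃ n', n = n' + 1 ∧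
      Reach C n' (fire C i p)) ∧ (p i < 0 → p j < 0 → mu i j ≠ 0 ∧ ∃ n0 d, n = n0 + mu i j ∧
        Reach C n0 d ∧ 1 ≤ d i ∧ 1 ≤ d j ∧ p = ch (fire C) i j (mu i j) d) := by
  obtain ⟨x, y, n0, d, hxy, hn, hd, hx, hy, rfl, hk⟩ := h
  have hne : x ≠ y := by rcases hxy with ⟨rfl, rfl⟩ | ⟨rfl, rfl⟩; exacts [hij, hij.symm]
  have hl' : i = x ∨ i = y := by rcases hxy with ⟨rfl, rfl⟩ | ⟨rfl, rfl⟩ <;> tauto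
  have hl'' : j = x ∨ j = y := by rcases hxy with ⟨rfl, rfl⟩ | ⟨rfl, rfl⟩ <;> tauto
  have hmu : mu i j = mu x y := by
    rcases hxy with ⟨rfl, rfl⟩ | ⟨rfl, rfl⟩; exacts [rfl, hG.musymm _ _]
  obtain ⟨f, hf⟩ := hG.pair x y hne
  have poly : mu x y ≠ 0 → ch (fire C) i j (mu i j) d = ch (fire C) x y (mu x y) d := by
    intro h0
    rw [hmu]
    rcases hxy with ⟨rfl, rfl⟩ | ⟨rfl, rfl⟩
    · rfl
    · exact (polygon hG hne h0 d).symm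
  have hdi : 1 ≤ d i ∧ 1 ≤ d j := by
    rcases hxy with ⟨rfl, rfl⟩ | ⟨rfl, rfl⟩ <;> tauto
  -- the entry at the next letter
  have next : ∀ l, l = al x y k → (1 ≤ |ch (fire C) x y k d l| ∧
      (ch (fire C) x y k d l < 0 → mu x y ≠ 0 ∧ k = mu x y)) := by
    rintro l rfl
    by_cases hk' : mu x y = 0 ∨ k < mu x y
    · have := Vpos hf hx hy k hk'
      rw [(ch_val hG hf d k).1]
      exact ⟨by rw [abs_of_nonneg (by linarith)]; exact this, fun h => by linarith⟩
    · have e : k = mu x y := by omega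
      refine ⟨?_, fun _ => ⟨by omega, e⟩⟩
      rw [(ch_val hG hf d k).1, e, Vtop hf (by omega), abs_neg]
      exact hx.trans (le_abs_self _)
  have top : mu x y ≠ 0 ∧ k = mu x y → mu i j ≠ 0 ∧ ∃ n0 d', n = n0 + mu i j ∧
        Reach C n0 d' ∧ 1 ≤ d' i ∧ 1 ≤ d' j ∧
        ch (fire C) x y k d = ch (fire C) i j (mu i j) d' := by
    rintro ⟨h0, rfl⟩
    exact ⟨by rwa [hmu], n0, d, by rw [hmu]; exact hn, hd, hdi.1, hdi.2, (poly h0).symm⟩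
  rcases al_cases x y i k hl' with h | h
  · obtain ⟨b1, b2⟩ := next i h
    refine ⟨b1, fun hneg => ?_, fun hneg _ => top (b2 hneg)⟩
    obtain ⟨h0, rfl⟩ := b2 hneg
    have h2 : 2 ≤ mu x y := (hf.2.2.2.2 h0).2.2.1
    refine ⟨n0 + (mu x y - 1), by omega, ?_⟩
    rw [polygon hG hne h0 d]
    have : ch (fire C) y x (mu x y) d = fire C i (ch (fire C) y x (mu x y - 1) d) := by
      conv_lhs => rw [show mu x y = mu x y - 1 + 1 by omega]
      rw [ch, ← al_succ, show mu x y - 1 + 1 = mu x y by omega, ← h]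
    rw [this, fire_fire hG]
    exact climb hG hne.symm hd hy hx _ (by rw [hG.musymm y x]; omega)
  · have hjn : j = al x y k := by
      rcases al_cases x y j k hl'' with h' | h'
      · exact h'
      · exact absurd (h.trans h'.symm) hij
    obtain ⟨b1, b2⟩ := next j hjn
    cases k with
    | zero =>
      have : i = y := by simpa [al_zero] using h
      simp only [ch]
      refine ⟨hdi.1.trans (le_abs_self _), fun h => by linarith [hdi.1], fun h => by linarith [hdi.1]⟩
    | succ k =>
      rw [al_succ] at h
      have hv := (ch_val hG hf d k).2
      have hp := Vpos hf hx hy k (by omega)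
      rw [← h] at hv
      refine ⟨?_, fun _ => ⟨n0 + k, by omega, ?_⟩, fun _ hj => top (b2 hj)⟩
      · rw [hv, abs_neg]; exact hp.trans (le_abs_self _)
      · rw [ch, ← h, fire_fire hG]
        exact climb hG hne hd hx hy k (by omega)

def Inv (C : I → I → ℝ) (n : ℕ) : Prop := ∀ p, Reach C n p → (∀ i, 1 ≤ |p i|) ∧
  ∀ i, p i < 0 → ∃ n', n = n' + 1 ∧ Reach C n' (fire C i p)

theorem OnCh.symm' {i j : I} {n : ℕ} {p : I → ℝ} {k : ℕ}
    (h : OnCh C mu n p i j k) : OnCh C mu n p j i k := by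
  obtain ⟨x, y, n0, d, hxy, h⟩ := h
  exact ⟨x, y, n0, d, hxy.symm, h⟩

theorem onCh_of_reach (hG : GameOK C mu) {i j : I} (hij : i ≠ j) : ∀ n,
    (∀ n' ≤ n, Inv C n') → ∀ p, Reach C n p → ∃ k, OnCh C mu n p i j k := by
  intro n
  induction n with
  | zero =>
    intro _ p hp
    cases hp
    exact ⟨0, i, j, 0, _, Or.inl ⟨rfl, rfl⟩, rfl, Reach.zero, le_rfl, le_rfl, rfl, by omega⟩
  | succ n ih =>
    intro hI p hp
    obtain ⟨h1, h2⟩ := hI _ le_rfl p hp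
    have step : ∀ l, (l = i ∨ l = j) → p l < 0 → ∃ k, OnCh C mu (n+1) p i j k := by
      intro l hl hneg
      obtain ⟨n', hn', hr⟩ := h2 l hneg
      obtain rfl : n' = n := by omega
      obtain ⟨k, hk⟩ := ih (fun n' hn' => hI n' (by omega)) _ hr
      have := hk.ext hG hij hl (by rw [fire_self hG]; linarith)
      rw [fire_fire hG] at this
      exact ⟨_, this⟩
    by_cases hi : p i < 0
    · exact step i (Or.inl rfl) hi
    by_cases hj : p j < 0
    · exact step j (Or.inr rfl) hj
    push Not at hi hj
    refine ⟨0, i, j, n+1, p, Or.inl ⟨rfl, rfl⟩, rfl, hp, ?_, ?_, rfl, by omega⟩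
    · have := h1 i; rwa [abs_of_nonneg hi] at this
    · have := h1 j; rwa [abs_of_nonneg hj] at this

theorem inv_all (hG : GameOK C mu) (n : ℕ) : Inv C n := by
  induction n using Nat.strong_induction_on with
  | _ n ih =>
  intro p hp
  cases hp with
  | zero => exact ⟨fun i => by simp, fun i h => by norm_num at h⟩
  | succ j hp' hpos =>
    rename_i n p'
    have hI : ∀ n' ≤ n, Inv C n' := fun n' h => ih n' (by omega)
    have key : ∀ i, 1 ≤ |fire C j p' i| ∧ (fire C j p' i < 0 → ∃ n', n + 1 = n' + 1 ∧
        Reach C n' (fire C i (fire C j p'))) := by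
      intro i
      by_cases hij : i = j
      · subst hij
        rw [fire_self hG, fire_fire hG, abs_neg]
        exact ⟨(hI n le_rfl p' hp').1 i, fun _ => ⟨n, rfl, hp'⟩⟩
      · obtain ⟨k, hk⟩ := onCh_of_reach hG hij n hI p' hp'
        have := (hk.ext hG hij (Or.inr rfl) hpos).val hG hij
        exact ⟨this.1, this.2.1⟩
    exact ⟨fun i => (key i).1, fun i => (key i).2⟩

theorem reach_unique (hG : GameOK C mu) : ∀ n n' p, Reach C n p → Reach C n' p → n = n' := by
  intro n
  induction n with
  | zero =>
    intro n' p h h'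
    cases h
    cases n' with
    | zero => rfl
    | succ n' =>
      exfalso
      generalize hq : (fun _ : I => (1:ℝ)) = q at h'
      cases h' with
      | succ i hp hpos =>
        have := congrFun hq i
        rw [fire_self hG] at this
        linarith
  | succ n ih =>
    intro n' p h h'
    cases h with
    | succ i hp hpos =>
      obtain ⟨n'', rfl, hr⟩ := (inv_all hG n' _ h').2 i (by rw [fire_self hG]; linarith)
      rw [fire_fire hG] at hr
      rw [ih _ _ hp hr]

theorem two_desc (hG : GameOK C mu) {i j : I} (hij : i ≠ j) {n : ℕ} {p : I → ℝ}
    (h : Reach C n p) (hi : p i < 0) (hj : p j < 0) : mu i j ≠ 0 ∧ ∃ n0 d, n = n0 + mu i j ∧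
        Reach C n0 d ∧ 1 ≤ d i ∧ 1 ≤ d j ∧ p = ch (fire C) i j (mu i j) d := by
  obtain ⟨k, hk⟩ := onCh_of_reach hG hij n (fun n' _ => inv_all hG n') p h
  exact (hk.val hG hij).2.2 hi hj

end game
end HF

namespace HF

noncomputable section

section trig

theorem pairOK_inf : PairOK (-2) 0 (fun n => (n:ℝ)) := by
  refine ⟨by simp, by simp, fun n => by push_cast; ring, fun n h _ => by show (1:ℝ) ≤ (n:ℝ); exact_mod_cast h, fun h => absurd rfl h⟩

theorem pairOK_fin (mu : ℕ) (h : 2 ≤ mu) :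
    PairOK (-2 * Real.cos (Real.pi / mu)) mu
      (fun n => Real.sin (n * (Real.pi / mu)) / Real.sin (Real.pi / mu)) := by
  set θ := Real.pi / mu with hθ
  have hmu : (2:ℝ) ≤ mu := by exact_mod_cast h
  have hmθ : mu * θ = Real.pi := by rw [hθ]; field_simp
  have hpos : 0 < θ := by positivity
  have hle : θ ≤ Real.pi / 2 := by nlinarith
  have hs : 0 < Real.sin θ := Real.sin_pos_of_pos_of_lt_pi hpos (by linarith [Real.pi_pos])
  refine ⟨by simp, by simp [hs.ne'], fun n => ?_, fun n h1 h2 => ?_, fun _ => ⟨?_, ?_, h, ?_⟩⟩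
  · have : Real.sin ((n+2:ℕ) * θ) = 2 * Real.cos θ * Real.sin ((n+1:ℕ)*θ) - Real.sin (n*θ) := by
      have e1 : ((n+2:ℕ):ℝ) * θ = ((n+1:ℕ):ℝ) * θ + θ := by push_cast; ring
      have e2 : (n:ℝ) * θ = ((n+1:ℕ):ℝ) * θ - θ := by push_cast; ring
      rw [e1, e2, Real.sin_add, Real.sin_sub]; ring
    beta_reduce; rw [this]; field_simp
  · have h2 : n < mu := by omega
    rw [le_div_iff₀ hs, one_mul]
    have e : Real.sin (n*θ) - Real.sin θ = 2 * Real.sin ((n*θ - θ)/2) * Real.cos ((n*θ+θ)/2) :=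
      Real.sin_sub_sin _ _
    have hn1 : (1:ℝ) ≤ n := by exact_mod_cast h1
    have hn2 : (n:ℝ) + 1 ≤ mu := by exact_mod_cast h2
    have hA : 0 ≤ Real.sin ((n*θ - θ)/2) := by
      apply Real.sin_nonneg_of_nonneg_of_le_pi <;> nlinarith
    have hB : 0 ≤ Real.cos ((n*θ+θ)/2) := by
      apply Real.cos_nonneg_of_neg_pi_div_two_le_of_le <;> nlinarith
    nlinarith [mul_nonneg hA hB]
  · simp only [hmθ, Real.sin_pi, zero_div]
  · have : ((mu - 1 : ℕ):ℝ) * θ = Real.pi - θ := by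
      rw [Nat.cast_sub (by omega)]; push_cast; linarith
    simp only [this, Real.sin_pi_sub, div_self hs.ne']
  · have := Real.sin_sq_add_cos_sq θ
    nlinarith [pow_pos hs 2]

theorem quad_lower (α β γ : ℝ) (hα0 : 0 < α) (hα : α ≤ Real.pi/2) (hβ0 : 0 < β) (hβ : β ≤ Real.pi/2)
    (hγ0 : 0 < γ) (hγ : γ ≤ Real.pi/2) (h : Real.pi < α + β + γ) :
    ∃ ε > 0, ∀ a b c : ℝ, 0 ≤ b → 0 ≤ c → ε * (b^2+c^2) ≤
      a^2+b^2+c^2 - 2*a*b*Real.cos γ - 2*b*c*Real.cos α - 2*a*c*Real.cos β := by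
  have sβ : 0 < Real.sin β := Real.sin_pos_of_pos_of_lt_pi hβ0 (by linarith [Real.pi_pos])
  have sγ : 0 < Real.sin γ := Real.sin_pos_of_pos_of_lt_pi hγ0 (by linarith [Real.pi_pos])
  have cα : 0 ≤ Real.cos α := Real.cos_nonneg_of_neg_pi_div_two_le_of_le (by linarith) hα
  have cβ : 0 ≤ Real.cos β := Real.cos_nonneg_of_neg_pi_div_two_le_of_le (by linarith) hβ
  have cγ : 0 ≤ Real.cos γ := Real.cos_nonneg_of_neg_pi_div_two_le_of_le (by linarith) hγ
  have key : Real.cos α + Real.cos β * Real.cos γ < Real.sin β * Real.sin γ := by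
    have : Real.cos α < Real.cos (Real.pi - (β+γ)) :=
      Real.cos_lt_cos_of_nonneg_of_le_pi (by linarith) (by linarith [Real.pi_pos]) (by linarith)
    rw [Real.cos_pi_sub, Real.cos_add] at this
    linarith
  set x := Real.sin β with hx
  set y := Real.sin γ with hy
  set t := Real.cos α + Real.cos β * Real.cos γ with ht
  have ht0 : 0 ≤ t := by positivity
  have hxy : 0 < x * y := mul_pos sβ sγ
  set τ := t / (x*y) with hτ
  have hτ1 : τ < 1 := by rw [hτ, div_lt_one hxy]; exact key
  have hτ0 : 0 ≤ τ := by positivity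
  have htτ : t = τ * (x*y) := by rw [hτ]; field_simp
  have e1 := Real.sin_sq_add_cos_sq β
  have e2 := Real.sin_sq_add_cos_sq γ
  rw [← hx] at e1
  rw [← hy] at e2
  refine ⟨(1-τ) * min (x^2) (y^2), ?_, ?_⟩
  · have : 0 < min (x^2) (y^2) := lt_min (by positivity) (by positivity)
    exact mul_pos (by linarith) this
  · intro a b c hb hc
    have q : a^2+b^2+c^2 - 2*a*b*Real.cos γ - 2*b*c*Real.cos α - 2*a*c*Real.cos β =
      (a - b * Real.cos γ - c * Real.cos β)^2 + τ * (b*y - c*x)^2 + (1-τ)*(b^2*y^2 + c^2*x^2) := by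
      have : Real.cos α = τ * (x*y) - Real.cos β * Real.cos γ := by linarith
      rw [this]
      linear_combination (-c^2) * e1 + (-b^2) * e2
    rw [q]
    have m1 := min_le_left (x^2) (y^2)
    have m2 := min_le_right (x^2) (y^2)
    have : (1-τ) * (min (x^2) (y^2) * (b^2+c^2)) ≤ (1-τ)*(b^2*y^2 + c^2*x^2) := by
      apply mul_le_mul_of_nonneg_left _ (by linarith)
      nlinarith [sq_nonneg b, sq_nonneg c]
    nlinarith [sq_nonneg (a - b * Real.cos γ - c * Real.cos β), mul_nonneg hτ0 (sq_nonneg (b*y - c*x))]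

theorem quad_bound (α β γ : ℝ) (hα0 : 0 < α) (hα : α ≤ Real.pi/2) (hβ0 : 0 < β) (hβ : β ≤ Real.pi/2)
    (hγ0 : 0 < γ) (hγ : γ ≤ Real.pi/2) (h : Real.pi < α + β + γ) :
    ∃ K : ℝ, ∀ a b c : ℝ, 0 ≤ a → 0 ≤ b → 0 ≤ c →
      a^2+b^2+c^2 - 2*a*b*Real.cos γ - 2*b*c*Real.cos α - 2*a*c*Real.cos β = a + b + c →
      a + b + c ≤ K := by
  obtain ⟨ε, hε, h1⟩ := quad_lower α β γ hα0 hα hβ0 hβ hγ0 hγ h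
  obtain ⟨δ, hδ, h2⟩ := quad_lower β γ α hβ0 hβ hγ0 hγ hα0 hα (by linarith)
  refine ⟨3 / ε + 3 / δ, fun a b c ha hb hc hq => ?_⟩
  have i1 := h1 a b c hb hc
  have i2 := h2 b c a hc ha
  rw [hq] at i1
  have i2' : δ * (c^2+a^2) ≤ a + b + c := by rw [← hq]; linarith
  set s := a + b + c with hs
  have j1 : b^2+c^2 ≤ s / ε := by rw [le_div_iff₀ hε]; linarith
  have j2 : c^2+a^2 ≤ s / δ := by rw [le_div_iff₀ hδ]; linarith
  have hs0 : 0 ≤ s := by positivity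
  have : s^2 ≤ 3 * (s/ε + s/δ) := by
    nlinarith [sq_nonneg (a-b), sq_nonneg (b-c), sq_nonneg (a-c), sq_nonneg c]
  by_contra hcon
  push Not at hcon
  have e : 3 * (s/ε + s/δ) = s * (3/ε + 3/δ) := by ring
  have hsp : 0 < s := lt_of_le_of_lt (by positivity) hcon
  nlinarith

end trig

section matrix
variable {N : ℕ} (m : Fin (N+3) → ℕ)

def gmu (i j : Fin (N+3)) : ℕ := if j = i+1 then m i else if i = j+1 then m j else 0
def gC (i j : Fin (N+3)) : ℝ :=
  if i = j then 2 else if gmu m i j = 0 then -2 else -2 * Real.cos (Real.pi / gmu m i j)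

theorem fin_succ_ne (i : Fin (N+3)) : i + 1 ≠ i := by
  intro h
  rw [Fin.ext_iff, Fin.val_add_one] at h
  split_ifs at h with h'
  · rw [Fin.ext_iff, Fin.val_last] at h'; omega
  · omega

theorem fin_succ_succ_ne (i : Fin (N+3)) : i + 1 + 1 ≠ i := by
  intro h
  rw [Fin.ext_iff, Fin.val_add_one] at h
  split_ifs at h with h'
  · rw [Fin.ext_iff, Fin.val_last, Fin.val_add_one] at h'
    split_ifs at h' <;> omega
  · rw [Fin.val_add_one] at h
    split_ifs at h with h''
    · rw [Fin.ext_iff, Fin.val_last] at h''; omega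
    · omega

theorem fin_three (hN : N ≠ 0) (i : Fin (N+3)) : i + 1 + 1 + 1 ≠ i := by
  intro h
  have h1 := Fin.val_add_one (n := N+2) i
  have h2 := Fin.val_add_one (n := N+2) (i+1)
  have h3 := Fin.val_add_one (n := N+2) (i+1+1)
  rw [h] at h3
  obtain ⟨b, hb⟩ : ∃ b, b = i + 1 + 1 := ⟨_, rfl⟩
  rw [← hb] at h2 h3
  obtain ⟨a, ha⟩ : ∃ b, b = i + 1 := ⟨_, rfl⟩
  rw [← ha] at h1 h2
  clear h hb ha
  simp only [Fin.ext_iff, Fin.val_last] at h1 h2 h3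
  split_ifs at h1 h2 h3 <;> omega

theorem gmu_symm (i j : Fin (N+3)) : gmu m i j = gmu m j i := by
  unfold gmu
  by_cases h1 : j = i + 1
  · by_cases h2 : i = j + 1
    · exact absurd (by rw [← h1, ← h2]) (fin_succ_succ_ne i)
    · rw [if_pos h1, if_neg h2, if_pos h1]
  · by_cases h2 : i = j + 1
    · rw [if_neg h1, if_pos h2, if_pos h2]
    · rw [if_neg h1, if_neg h2, if_neg h2, if_neg h1]

theorem gmu_succ (e : Fin (N+3)) : gmu m e (e+1) = m e := by simp [gmu]

theorem gmu_ne (i j : Fin (N+3)) (h : gmu m i j ≠ 0) :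
    ∃ e, (i = e ∧ j = e+1) ∨ (i = e+1 ∧ j = e) := by
  unfold gmu at h
  split_ifs at h with h1 h2
  · exact ⟨i, Or.inl ⟨rfl, h1⟩⟩
  · exact ⟨j, Or.inr ⟨h2, rfl⟩⟩
  · exact absurd rfl h

theorem gmu_two (hm : ∀ j, 2 ≤ m j) (i j : Fin (N+3)) (h : gmu m i j ≠ 0) : 2 ≤ gmu m i j := by
  unfold gmu at h ⊢
  split_ifs at h ⊢
  · exact hm _
  · exact hm _
  · exact absurd rfl h

theorem gameOK (hm : ∀ j, 2 ≤ m j) : GameOK (gC m) (gmu m) where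
  two i := by simp [gC]
  symm i j := by
    unfold gC; rw [gmu_symm m i j]
    by_cases h : i = j
    · simp [h]
    · simp [h, Ne.symm h]
  musymm := gmu_symm m
  pair i j hij := by
    by_cases h : gmu m i j = 0
    · have : gC m i j = -2 := by simp [gC, hij, h]
      rw [this, h]; exact ⟨_, pairOK_inf⟩
    · have : gC m i j = -2 * Real.cos (Real.pi / gmu m i j) := by simp [gC, hij, h]
      rw [this]; exact ⟨_, pairOK_fin _ (gmu_two m hm i j h)⟩

end matrix

/-- combinatorial system: a graded set with involutions -/
structure Sys (N : ℕ) (m : Fin (N+3) → ℕ) where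
  W : Type
  act : Fin (N+3) → W → W
  len : W → ℕ
  one : W
  act_act : ∀ i w, act i (act i w) = w
  len_one : len one = 0
  len_zero : ∀ w, len w = 0 → w = one
  len_act : ∀ i w, len (act i w) = len w + 1 ∨ len w = len (act i w) + 1
  exists_desc : ∀ w, len w ≠ 0 → ∃ i, len (act i w) < len w
  pair : ∀ i j w, i ≠ j → len (act i w) < len w → len (act j w) < len w →
    ∃ e, (i = e ∧ j = e+1) ∨ (i = e+1 ∧ j = e)
  down : ∀ e w, len (act e w) < len w → len (act (e+1) w) < len w →
    ∃ d, len d < len (act e d) ∧ len d < len (act (e+1) d) ∧ ch act e (e+1) (m e) d = w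
  up : ∀ e d, len d < len (act e d) → len d < len (act (e+1) d) →
    (∀ k ≤ m e, len (ch act e (e+1) k d) = len d + k ∧ len (ch act (e+1) e k d) = len d + k) ∧
    ch act e (e+1) (m e) d = ch act (e+1) e (m e) d

def Sys.Tri {N : ℕ} {m : Fin (N+3) → ℕ} (X : Sys N m) : Prop :=
  ∀ w i j k, i ≠ j → j ≠ k → i ≠ k → X.len (X.act i w) < X.len w →
    X.len (X.act j w) < X.len w → X.len (X.act k w) < X.len w → False

section build
variable {N : ℕ} {m : Fin (N+3) → ℕ} (hm : ∀ j, 2 ≤ m j)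

def GW (m : Fin (N+3) → ℕ) : Type := {p : Fin (N+3) → ℝ // ∃ n, Reach (gC m) n p}

def glen (w : GW m) : ℕ := w.2.choose
theorem glen_spec (w : GW m) : Reach (gC m) (glen w) w.1 := w.2.choose_spec

theorem glen_eq (hm : ∀ j, 2 ≤ m j) (w : GW m) {n : ℕ} (h : Reach (gC m) n w.1) : glen w = n :=
  reach_unique (gameOK m hm) _ _ _ (glen_spec w) h

theorem reach_fire (hm : ∀ j, 2 ≤ m j) (i : Fin (N+3)) {p : Fin (N+3) → ℝ} {n : ℕ} (h : Reach (gC m) n p) :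
    (0 < p i ∧ Reach (gC m) (n+1) (fire (gC m) i p)) ∨
    (p i < 0 ∧ ∃ n', n = n'+1 ∧ Reach (gC m) n' (fire (gC m) i p)) := by
  obtain ⟨h1, h2⟩ := inv_all (gameOK m hm) n p h
  rcases lt_trichotomy (p i) 0 with h' | h' | h'
  · exact Or.inr ⟨h', h2 i h'⟩
  · have := h1 i; rw [h'] at this; norm_num at this
  · exact Or.inl ⟨h', h.succ i h'⟩

def gact (hm : ∀ j, 2 ≤ m j) (i : Fin (N+3)) (w : GW m) : GW m :=
  ⟨fire (gC m) i w.1, by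
    rcases reach_fire hm i (glen_spec w) with ⟨_, h⟩ | ⟨_, n', _, h⟩ <;> exact ⟨_, h⟩⟩

theorem glen_gact (i : Fin (N+3)) (w : GW m) :
    (0 < w.1 i ∧ glen (gact hm i w) = glen w + 1) ∨
    (w.1 i < 0 ∧ glen w = glen (gact hm i w) + 1) := by
  rcases reach_fire hm i (glen_spec w) with ⟨h', h⟩ | ⟨h', n', e, h⟩
  · exact Or.inl ⟨h', glen_eq hm (gact hm i w) h⟩
  · refine Or.inr ⟨h', ?_⟩
    rw [glen_eq hm (gact hm i w) h, e]

theorem desc_iff (i : Fin (N+3)) (w : GW m) : glen (gact hm i w) < glen w ↔ w.1 i < 0 := by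
  rcases glen_gact hm i w with ⟨h, e⟩ | ⟨h, e⟩
  · constructor
    · intro; omega
    · intro; linarith
  · exact ⟨fun _ => h, fun _ => by omega⟩

theorem asc_iff (i : Fin (N+3)) (w : GW m) : glen w < glen (gact hm i w) ↔ 1 ≤ w.1 i := by
  have h1 := (inv_all (gameOK m hm) _ _ (glen_spec w)).1 i
  rcases glen_gact hm i w with ⟨h, e⟩ | ⟨h, e⟩
  · rw [abs_of_pos h] at h1
    exact ⟨fun _ => h1, fun _ => by omega⟩
  · constructor
    · intro; omega
    · intro; linarith

theorem ch_gact (i j : Fin (N+3)) (k : ℕ) (w : GW m) :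
    (ch (gact hm) i j k w).1 = ch (fire (gC m)) i j k w.1 := by
  induction k with
  | zero => rfl
  | succ k ih => rw [ch, ch, ← ih]; rfl

def gsys : Sys N m where
  W := GW m
  act := gact hm
  len := glen
  one := ⟨fun _ => 1, 0, Reach.zero⟩
  act_act i w := Subtype.ext (fire_fire (gameOK m hm) i w.1)
  len_one := glen_eq hm _ Reach.zero
  len_zero w h := by
    have := glen_spec w
    rw [h] at this
    apply Subtype.ext
    generalize w.1 = p at this
    cases this
    rfl
  len_act i w := by
    rcases glen_gact hm i w with ⟨h, e⟩ | ⟨h, e⟩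
    · exact Or.inl e
    · exact Or.inr e
  exists_desc w h := by
    have h1 := glen_spec w
    have : ∃ i, w.1 i < 0 := by
      generalize glen w = n at *
      generalize w.1 = p at *
      cases h1 with
      | zero => exact absurd rfl h
      | succ i hp hpos => exact ⟨i, by rw [fire_self (gameOK m hm)]; linarith⟩
    obtain ⟨i, hi⟩ := this
    exact ⟨i, (desc_iff hm i w).mpr hi⟩
  pair i j w hij hi hj :=
    gmu_ne m i j (two_desc (gameOK m hm) hij (glen_spec w) ((desc_iff hm i w).mp hi)
      ((desc_iff hm j w).mp hj)).1
  down e w h1 h2 := by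
    obtain ⟨-, n0, d, hn, hd, di, dj, hp⟩ := two_desc (gameOK m hm) (fin_succ_ne e).symm (glen_spec w)
      ((desc_iff hm _ w).mp h1) ((desc_iff hm _ w).mp h2)
    refine ⟨⟨d, n0, hd⟩, (asc_iff hm _ _).mpr di, (asc_iff hm _ _).mpr dj, ?_⟩
    apply Subtype.ext
    exact (ch_gact hm _ _ _ (⟨d, n0, hd⟩ : GW m)).trans (by rw [hp, gmu_succ])
  up e d h1 h2 := by
    have di := (asc_iff hm _ _).mp h1
    have dj := (asc_iff hm _ _).mp h2
    refine ⟨fun k hk => ⟨?_, ?_⟩, ?_⟩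
    · apply glen_eq hm
      rw [ch_gact]
      exact climb (gameOK m hm) (fin_succ_ne e).symm (glen_spec d) di dj k
        (Or.inr (by rwa [gmu_succ]))
    · apply glen_eq hm
      rw [ch_gact]
      exact climb (gameOK m hm) (fin_succ_ne e) (glen_spec d) dj di k
        (Or.inr (by rwa [gmu_symm, gmu_succ]))
    · apply Subtype.ext
      rw [ch_gact, ch_gact]
      have := polygon (gameOK m hm) (fin_succ_ne e).symm
        (by rw [gmu_succ]; have := hm e; omega) d.1
      rwa [gmu_succ] at this

theorem gC_vals (hm : ∀ j, 2 ≤ m j) (e : Fin (N+3)) :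
    gC m e (e+1) = -2 * Real.cos (Real.pi / m e) ∧ gC m (e+1) e = -2 * Real.cos (Real.pi / m e) := by
  have h : m e ≠ 0 := by have := hm e; omega
  constructor
  · simp [gC, gmu_succ, h, (fin_succ_ne e).symm]
  · rw [(gameOK m hm).symm]; simp [gC, gmu_succ, h, (fin_succ_ne e).symm]

end build

section three
variable {m : Fin (0+3) → ℕ}

theorem c3 (hm : ∀ j, 2 ≤ m j) : gC m 0 0 = 2 ∧ gC m 1 1 = 2 ∧ gC m 2 2 = 2 ∧
    gC m 0 1 = -2 * Real.cos (Real.pi / m 0) ∧ gC m 1 0 = -2 * Real.cos (Real.pi / m 0) ∧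
    gC m 1 2 = -2 * Real.cos (Real.pi / m 1) ∧ gC m 2 1 = -2 * Real.cos (Real.pi / m 1) ∧
    gC m 2 0 = -2 * Real.cos (Real.pi / m 2) ∧ gC m 0 2 = -2 * Real.cos (Real.pi / m 2) :=
  ⟨(gameOK m hm).two 0, (gameOK m hm).two 1, (gameOK m hm).two 2,
    (gC_vals hm 0).1, (gC_vals hm 0).2, (gC_vals hm 1).1, (gC_vals hm 1).2,
    (gC_vals hm 2).1, (gC_vals hm 2).2⟩

theorem ang (hm : ∀ j, 2 ≤ m j) (e : Fin (0+3)) : 0 < Real.pi / m e ∧ Real.pi / m e ≤ Real.pi / 2 := by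
  have h : (2:ℝ) ≤ m e := by exact_mod_cast hm e
  have := Real.pi_pos
  refine ⟨by positivity, ?_⟩
  gcongr

theorem bound3 (hm : ∀ j, 2 ≤ m j) (h : Real.pi < Real.pi / m 0 + Real.pi / m 1 + Real.pi / m 2) :
    ∃ B : ℕ, ∀ n p, Reach (gC m) n p → n ≤ B := by
  obtain ⟨K, hK⟩ := quad_bound (Real.pi / m 1) (Real.pi / m 2) (Real.pi / m 0)
    (ang hm 1).1 (ang hm 1).2 (ang hm 2).1 (ang hm 2).2 (ang hm 0).1 (ang hm 0).2 (by linarith)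
  obtain ⟨c00, c11, c22, c01, c10, c12, c21, c20, c02⟩ := c3 hm
  obtain ⟨B, hB⟩ := exists_nat_ge K
  refine ⟨B, fun n p hp => ?_⟩
  have inv : ∃ a b c : ℝ, 0 ≤ a ∧ 0 ≤ b ∧ 0 ≤ c ∧
      (∀ l, p l = 1 - gC m 0 l * a - gC m 1 l * b - gC m 2 l * c) ∧
      a^2+b^2+c^2 - 2*a*b*Real.cos (Real.pi / m 0) - 2*b*c*Real.cos (Real.pi / m 1)
        - 2*a*c*Real.cos (Real.pi / m 2) = a + b + c ∧ (n:ℝ) ≤ a + b + c := by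
    induction hp with
    | zero => exact ⟨0, 0, 0, le_rfl, le_rfl, le_rfl, by simp, by simp, by simp⟩
    | succ i hp hpos ih =>
      rename_i n p
      obtain ⟨a, b, c, ha, hb, hc, hl, hq, hn⟩ := ih
      have h1 := (inv_all (gameOK m hm) _ _ hp).1 i
      rw [abs_of_pos hpos] at h1
      have e0 := hl 0
      have e1 := hl 1
      have e2 := hl 2
      rw [c00, c10, c20] at e0
      rw [c01, c11, c21] at e1
      rw [c02, c12, c22] at e2
      fin_cases i
      · refine ⟨a + p 0, b, c, by positivity, hb, hc, fun l => ?_, ?_, ?_⟩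
        · simp only [fire, hl l]; dsimp; ring
        · linear_combination hq + (p 0) * e0
        · push_cast; dsimp at h1; linarith
      · refine ⟨a, b + p 1, c, ha, by positivity, hc, fun l => ?_, ?_, ?_⟩
        · simp only [fire, hl l]; dsimp; ring
        · linear_combination hq + (p 1) * e1
        · push_cast; dsimp at h1; linarith
      · refine ⟨a, b, c + p 2, ha, hb, by positivity, fun l => ?_, ?_, ?_⟩
        · simp only [fire, hl l]; dsimp; ring
        · linear_combination hq + (p 2) * e2
        · push_cast; dsimp at h1; linarith
  obtain ⟨a, b, c, ha, hb, hc, hl, hq, hn⟩ := inv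
  have := hK a b c ha hb hc hq
  exact_mod_cast hn.trans (this.trans hB)

theorem tri3 (hm : ∀ j, 2 ≤ m j) (h : Real.pi / m 0 + Real.pi / m 1 + Real.pi / m 2 ≤ Real.pi) {n : ℕ}
    {p : Fin (0+3) → ℝ} (hp : Reach (gC m) n p) : ¬ (p 0 < 0 ∧ p 1 < 0 ∧ p 2 < 0) := by
  obtain ⟨c00, c11, c22, c01, c10, c12, c21, c20, c02⟩ := c3 hm
  obtain ⟨a0, b0⟩ := ang hm 0
  obtain ⟨a1, b1⟩ := ang hm 1
  obtain ⟨a2, b2⟩ := ang hm 2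
  set u := Real.pi / m 0
  set v := Real.pi / m 1
  set w := Real.pi / m 2
  have hpi := Real.pi_pos
  have s0 : 0 < Real.sin u := Real.sin_pos_of_pos_of_lt_pi a0 (by linarith)
  have s1 : 0 < Real.sin v := Real.sin_pos_of_pos_of_lt_pi a1 (by linarith)
  have s2 : 0 < Real.sin (u+v) := Real.sin_pos_of_pos_of_lt_pi (by linarith) (by linarith)
  have cw : - Real.cos (u+v) ≤ Real.cos w := by
    rw [← Real.cos_pi_sub]
    exact Real.cos_le_cos_of_nonneg_of_le_pi (by linarith) (by linarith) (by linarith)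
  have sa := Real.sin_add u v
  have ca := Real.cos_add u v
  have p0 := Real.sin_sq_add_cos_sq u
  have p1 := Real.sin_sq_add_cos_sq v
  have key : 0 < Real.sin v * p 0 + Real.sin (u+v) * p 1 + Real.sin u * p 2 := by
    induction hp with
    | zero => simp; positivity
    | succ i hp hpos ih =>
      rename_i n p
      have k0 : Real.sin v ≤ Real.cos u * Real.sin (u+v) + Real.cos w * Real.sin u := by
        have : Real.sin v = Real.cos u * Real.sin (u+v) + (-Real.cos (u+v)) * Real.sin u := by
          rw [sa, ca]; linear_combination (-Real.sin v) * p0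
        nlinarith
      have k2 : Real.sin u ≤ Real.cos v * Real.sin (u+v) + Real.cos w * Real.sin v := by
        have : Real.sin u = Real.cos v * Real.sin (u+v) + (-Real.cos (u+v)) * Real.sin v := by
          rw [sa, ca]; linear_combination (-Real.sin u) * p1
        nlinarith
      fin_cases i
      · dsimp at hpos
        simp only [fire]; dsimp
        rw [c00, c01, c02]
        have := mul_nonneg hpos.le (sub_nonneg.mpr k0)
        linarith
      · dsimp at hpos
        simp only [fire]; dsimp
        rw [c10, c11, c12]
        have : Real.sin (u+v) * p 1 = Real.sin u * Real.cos v * p 1 + Real.cos u * Real.sin v * p 1 := by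
          rw [sa]; ring
        linarith
      · dsimp at hpos
        simp only [fire]; dsimp
        rw [c20, c21, c22]
        have := mul_nonneg hpos.le (sub_nonneg.mpr k2)
        linarith
  rintro ⟨n0, n1, n2⟩
  have := mul_pos s1 (neg_pos.mpr n0)
  have := mul_pos s2 (neg_pos.mpr n1)
  have := mul_pos s0 (neg_pos.mpr n2)
  linarith

end three

theorem exists_sys {N : ℕ} {m : Fin (N+3) → ℕ} (hm : ∀ j, 2 ≤ m j) :
    ∃ X : Sys N m, ((2:ℚ) ≤ ∑ j, (1 - 1 / (m j : ℚ)) → X.Tri) ∧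
      (¬ (2:ℚ) ≤ ∑ j, (1 - 1 / (m j : ℚ)) → ∃ B, ∀ w, X.len w ≤ B) := by
  refine ⟨gsys hm, fun h => ?_, fun h => ?_⟩
  · intro w i j k hij hjk hik hi hj hk
    by_cases hN : N = 0
    · subst hN
      have h' : Real.pi / m 0 + Real.pi / m 1 + Real.pi / m 2 ≤ Real.pi := by
        have h2 : (2:ℝ) ≤ ((∑ j, (1 - 1 / (m j : ℚ)) : ℚ) : ℝ) := by exact_mod_cast h
        push_cast at h2
        rw [Fin.sum_univ_three] at h2
        have hpi := Real.pi_pos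
        have : Real.pi / m 0 + Real.pi / m 1 + Real.pi / m 2 =
          Real.pi * (1 / m 0 + 1 / m 1 + 1 / m 2) := by ring
        rw [this]; nlinarith
      refine tri3 hm h' (glen_spec w) ?_
      have q : ∀ l : Fin (0+3), w.1 l < 0 := by
        intro l
        have : l = i ∨ l = j ∨ l = k := by
          revert hij hjk hik; clear * -; revert i j k l; decide
        rcases this with rfl | rfl | rfl
        · exact (desc_iff hm _ w).mp hi
        · exact (desc_iff hm _ w).mp hj
        · exact (desc_iff hm _ w).mp hk
      exact ⟨q 0, q 1, q 2⟩
    · obtain ⟨a, ha⟩ := (gsys hm).pair i j w hij hi hj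
      obtain ⟨b, hb⟩ := (gsys hm).pair j k w hjk hj hk
      obtain ⟨c, hc⟩ := (gsys hm).pair i k w hik hi hk
      have f3 := fin_three hN
      have f2 := fin_succ_succ_ne (N := N)
      rcases ha with ⟨rfl, rfl⟩ | ⟨rfl, rfl⟩ <;> rcases hb with ⟨hb, rfl⟩ | ⟨hb, rfl⟩ <;>
        rcases hc with ⟨hc, hc'⟩ | ⟨hc, hc'⟩ <;> grind
  · have hN : N = 0 := by
      by_contra hN
      apply h
      have hh : ∀ j, (1/2:ℚ) ≤ 1 - 1 / (m j : ℚ) := by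
        intro j
        have : (2:ℚ) ≤ m j := by exact_mod_cast hm j
        have : 1 / (m j:ℚ) ≤ 1/2 := by gcongr
        linarith
      have := Finset.sum_le_sum (s := Finset.univ) (fun j _ => hh j)
      rw [Finset.sum_const, Finset.card_univ, Fintype.card_fin, nsmul_eq_mul] at this
      refine le_trans ?_ this
      have : (1:ℚ) ≤ N := by exact_mod_cast Nat.one_le_iff_ne_zero.mpr hN
      push_cast; linarith
    subst hN
    have h' : Real.pi < Real.pi / m 0 + Real.pi / m 1 + Real.pi / m 2 := by
      have h2 : ((∑ j, (1 - 1 / (m j : ℚ)) : ℚ) : ℝ) < 2 := by exact_mod_cast not_le.mp h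
      push_cast at h2
      rw [Fin.sum_univ_three] at h2
      have hpi := Real.pi_pos
      have : Real.pi / m 0 + Real.pi / m 1 + Real.pi / m 2 =
        Real.pi * (1 / m 0 + 1 / m 1 + 1 / m 2) := by ring
      rw [this]; nlinarith
    obtain ⟨B, hB⟩ := bound3 hm h'
    exact ⟨B, fun w => hB _ _ (glen_spec w)⟩

end

end HF

namespace HF

section relv
variable {R M I : Type*} [CommRing R] [AddCommGroup M] [Module R M]

/-- linear operators as an action -/
def Op (L : I → M →ₗ[R] M) : I → M → M := fun i x => L i x

def Xv (L : I → M →ₗ[R] M) (i j : I) (m a : ℕ) (v : M) : M :=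
  if m ≤ 2 * a then ch (Op L) i j (2 * a - m) v else ch (Op L) j i (m - 2 * a) v

def RelV (L : I → M →ₗ[R] M) (p : ℕ → R) (m : ℕ) (i j : I) (v : M) : M :=
  ∑ a ∈ Finset.range (m + 1), p a • Xv L i j m a v

def Mid (L : I → M →ₗ[R] M) (p : ℕ → R) (m : ℕ) (i j : I) (v : M) : M :=
  ∑ a ∈ Finset.range (m - 1), p (a + 1) • Xv L i j m (a + 1) v

theorem relV_split (L : I → M →ₗ[R] M) (p : ℕ → R) {m : ℕ} (hm : 2 ≤ m) (i j : I) (v : M) :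
    RelV L p m i j v = p m • ch (Op L) i j m v + p 0 • ch (Op L) j i m v + Mid L p m i j v := by
  unfold RelV Mid
  rw [Finset.sum_range_succ]
  obtain ⟨k, rfl⟩ : ∃ k, m = k + 1 := ⟨m - 1, by omega⟩
  rw [Finset.sum_range_succ']
  have h1 : Xv L i j (k+1) (k+1) v = ch (Op L) i j (k+1) v := by
    unfold Xv; rw [if_pos (by omega), show 2 * (k+1) - (k+1) = k + 1 by omega]
  have h2 : Xv L i j (k+1) 0 v = ch (Op L) j i (k+1) v := by
    unfold Xv; rw [if_neg (by omega)]; rfl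
  rw [h1, h2, Nat.add_sub_cancel]; abel

/-- membership of the middle part -/
theorem mid_mem (L : I → M →ₗ[R] M) (p : ℕ → R) {m : ℕ} (i j : I) (v : M) (F : Submodule R M)
    (h : ∀ k, k + 2 ≤ m → (k + m) % 2 = 0 → ch (Op L) i j k v ∈ F ∧ ch (Op L) j i k v ∈ F) :
    Mid L p m i j v ∈ F := by
  refine Submodule.sum_mem _ fun a ha => F.smul_mem _ ?_
  rw [Finset.mem_range] at ha
  unfold Xv
  split_ifs
  · exact (h _ (by omega) (by omega)).1
  · exact (h _ (by omega) (by omega)).2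

theorem mid_congr (L L' : I → M →ₗ[R] M) (p : ℕ → R) {m : ℕ} (i j : I) (v : M) 
    (h : ∀ k, k + 1 ≤ m → ch (Op L) i j k v = ch (Op L') i j k v ∧
      ch (Op L) j i k v = ch (Op L') j i k v) :
    Mid L p m i j v = Mid L' p m i j v := by
  refine Finset.sum_congr rfl fun a ha => ?_
  rw [Finset.mem_range] at ha
  unfold Xv
  split_ifs
  · rw [(h _ (by omega)).1]
  · rw [(h _ (by omega)).2]

theorem al_add_two {α : Type*} (i j : α) (k : ℕ) : al i j (k+2) = al i j k := by
  rw [al_succ, al_succ]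
theorem al_par {α : Type*} (i j : α) {k l : ℕ} (h : (k + l) % 2 = 0) : al i j k = al i j l := by
  unfold al
  simp only [Nat.even_iff]
  have : k % 2 = l % 2 := by omega
  rw [this]
theorem al_par' {α : Type*} (i j : α) {k l : ℕ} (h : (k + l) % 2 = 1) : al i j k = al j i l := by
  rw [← al_succ]; exact al_par _ _ (by omega)

theorem Xv_eq (L : I → M →ₗ[R] M) (hL : ∀ i x, L i (L i x) = x) (i j : I) (a : ℕ) (v : M) (k : ℕ) :
    ch (Op L) j i k (ch (Op L) i j (2 * a) v) = Xv L i j k a v := by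
  induction k with
  | zero => simp [Xv, ch]
  | succ k ih =>
    rw [ch, ih]
    unfold Xv
    by_cases h : k + 1 ≤ 2 * a
    · rw [if_pos (by omega), if_pos h, show 2 * a - k = (2 * a - (k+1)) + 1 by omega, ch,
        al_par' i j (l := k) (by omega)]
      exact hL _ _
    · rw [if_neg h]
      by_cases h' : k ≤ 2 * a
      · obtain rfl : k = 2 * a := by omega
        rw [if_pos le_rfl, show 2 * a - 2 * a = 0 by omega, show 2 * a + 1 - 2 * a = 0 + 1 by omega,
          ch, ch, ch, al_par j i (l := 0) (by omega)]
      · rw [if_neg h', show k + 1 - 2 * a = (k - 2 * a) + 1 by omega, ch,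
          al_par j i (l := k - 2 * a) (by omega)]

theorem ch_two (L : I → M →ₗ[R] M) (i j : I) (a : ℕ) (v : M) :
    ch (Op L) i j (2 * a) v = ((L j * L i) ^ a) v := by
  induction a with
  | zero => simp [ch]
  | succ a ih =>
    rw [show 2 * (a+1) = 2 * a + 1 + 1 by ring, ch, ch, ih, pow_succ', al_succ,
      al_par j i (k := 2 * a) (l := 0) (by omega),
      al_par i j (k := 2 * a) (l := 0) (by omega), al_zero, al_zero]
    rfl

theorem ch_add (L : I → M →ₗ[R] M) (i j : I) (k : ℕ) (v w : M) :
    ch (Op L) i j k (v + w) = ch (Op L) i j k v + ch (Op L) i j k w := by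
  induction k with
  | zero => rfl
  | succ k ih => rw [ch, ih]; exact map_add _ _ _

theorem ch_smul (L : I → M →ₗ[R] M) (i j : I) (k : ℕ) (c : R) (w : M) :
    ch (Op L) i j k (c • w) = c • ch (Op L) i j k w := by
  induction k with
  | zero => rfl
  | succ k ih => rw [ch, ih]; exact map_smul _ _ _

theorem ch_sum (L : I → M →ₗ[R] M) (i j : I) (k : ℕ) (s : Finset ℕ) (w : ℕ → M) :
    ch (Op L) i j k (∑ a ∈ s, w a) = ∑ a ∈ s, ch (Op L) i j k (w a) := by
  induction s using Finset.induction with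
  | empty => 
    have := ch_smul L i j k 0 0
    simpa using this
  | insert a s ha ih => rw [Finset.sum_insert ha, Finset.sum_insert ha, ch_add, ih]

theorem ch_inj (L : I → M →ₗ[R] M) (hL : ∀ i x, L i (L i x) = x) (i j : I) (k : ℕ) (v : M)
    (h : ch (Op L) i j k v = 0) : v = 0 := by
  induction k with
  | zero => exact h
  | succ k ih =>
    apply ih
    have := congrArg (L (al i j k)) h
    rw [map_zero] at this
    rw [← this]; exact (hL _ _).symm

/-- the polynomial expression -/
def PV (p : ℕ → R) (m : ℕ) (A : M →ₗ[R] M) (v : M) : M :=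
  ∑ a ∈ Finset.range (m + 1), p a • (A ^ a) v

theorem relV_eq (L : I → M →ₗ[R] M) (hL : ∀ i x, L i (L i x) = x) (p : ℕ → R) (m : ℕ) (i j : I)
    (v : M) : RelV L p m i j v = ch (Op L) j i m (PV p m (L j * L i) v) := by
  unfold PV RelV
  rw [ch_sum]
  refine Finset.sum_congr rfl fun a _ => ?_
  rw [ch_smul, ← ch_two, Xv_eq L hL]

theorem relV_iff (L : I → M →ₗ[R] M) (hL : ∀ i x, L i (L i x) = x) (p : ℕ → R) (m : ℕ) (i j : I)
    (v : M) : RelV L p m i j v = 0 ↔ PV p m (L j * L i) v = 0 := by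
  rw [relV_eq L hL]
  constructor
  · exact ch_inj L hL _ _ _ _
  · intro h
    rw [h]
    simpa using ch_smul L j i m 0 0

theorem PV_comm (L : I → M →ₗ[R] M) (hL : ∀ i x, L i (L i x) = x) (p : ℕ → R) (m : ℕ) (i j s : I)
    (hs : s = i ∨ s = j) (v : M) : PV p m (L j * L i) (L s v) = L s (PV p m (L i * L j) v) := by
  unfold PV
  rw [map_sum]
  refine Finset.sum_congr rfl fun a _ => ?_
  rw [map_smul]
  congr 1
  have h : SemiconjBy (L s) (L i * L j) (L j * L i) := by
    apply LinearMap.ext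
    intro x
    rcases hs with rfl | rfl
    · simp [Module.End.mul_apply, hL]
    · simp [Module.End.mul_apply, hL]
  exact (congrArg (fun f : M →ₗ[R] M => f v) (h.pow_right a).eq).symm

theorem PV_lin (p : ℕ → R) (m : ℕ) (A : M →ₗ[R] M) : ∃ Q : M →ₗ[R] M, ∀ v, PV p m A v = Q v :=
  ⟨∑ a ∈ Finset.range (m + 1), p a • (A ^ a), fun v => by simp [PV, LinearMap.sum_apply]⟩

end relv
end HF

namespace HF

noncomputable section
section comb
variable {N : ℕ} {m : Fin (N+3) → ℕ} (X : Sys N m)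

def Bot (e : Fin (N+3)) (d : X.W) : Prop :=
  X.len d < X.len (X.act e d) ∧ X.len d < X.len (X.act (e+1) d)

def Ed (e i j : Fin (N+3)) : Prop := (i = e ∧ j = e+1) ∨ (i = e+1 ∧ j = e)

theorem Ed.symm {e i j : Fin (N+3)} (h : Ed e i j) : Ed e j i := by
  rcases h with ⟨rfl, rfl⟩ | ⟨rfl, rfl⟩
  · exact Or.inr ⟨rfl, rfl⟩
  · exact Or.inl ⟨rfl, rfl⟩

theorem Ed.ne {e i j : Fin (N+3)} (h : Ed e i j) : i ≠ j := by
  rcases h with ⟨rfl, rfl⟩ | ⟨rfl, rfl⟩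
  · exact (fin_succ_ne _).symm
  · exact fin_succ_ne _

theorem Ed.al {e i j : Fin (N+3)} (h : Ed e i j) (k : ℕ) : Ed e (al i j k) (al j i k) := by
  unfold HF.al; split_ifs
  · exact h
  · exact h.symm

theorem Ed.mk (e : Fin (N+3)) (k : ℕ) : Ed e (HF.al (e+1) e k) (HF.al e (e+1) k) :=
  Ed.al (Or.inr ⟨rfl, rfl⟩) k

variable {X}

theorem bot_len {e i j : Fin (N+3)} (h : Ed e i j) {d : X.W} (hd : Bot X e d) {k : ℕ} (hk : k ≤ m e) :
    X.len (ch X.act i j k d) = X.len d + k := by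
  have := (X.up e d hd.1 hd.2).1 k hk
  rcases h with ⟨rfl, rfl⟩ | ⟨rfl, rfl⟩
  · exact this.1
  · exact this.2

theorem bot_top {e i j : Fin (N+3)} (h : Ed e i j) {d : X.W} (hd : Bot X e d) :
    ch X.act i j (m e) d = ch X.act e (e+1) (m e) d := by
  have := (X.up e d hd.1 hd.2).2
  rcases h with ⟨rfl, rfl⟩ | ⟨rfl, rfl⟩
  · rfl
  · exact this.symm

/-- the last step of a chain -/
theorem ch_last {e i j : Fin (N+3)} (h : Ed e i j) {d : X.W} (hd : Bot X e d) (hm : 2 ≤ m e) :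
    X.act (al i j (m e - 1)) (ch X.act e (e+1) (m e) d) = ch X.act i j (m e - 1) d := by
  rw [← bot_top h hd]
  obtain ⟨k, hk⟩ : ∃ k, m e = k + 1 := ⟨m e - 1, by omega⟩
  rw [hk, Nat.add_sub_cancel, ch, X.act_act]

theorem top_desc' {e i j : Fin (N+3)} (h : Ed e i j) {d : X.W} (hd : Bot X e d) (hm : 2 ≤ m e) :
    X.len (X.act (al i j (m e - 1)) (ch X.act e (e+1) (m e) d)) <
      X.len (ch X.act e (e+1) (m e) d) := by
  rw [ch_last h hd hm, bot_len h hd (by omega), bot_len (Or.inl ⟨rfl, rfl⟩) hd le_rfl]; omega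

theorem top_desc {e i j : Fin (N+3)} (h : Ed e i j) {d : X.W} (hd : Bot X e d) (hm : 2 ≤ m e) :
    X.len (X.act i (ch X.act e (e+1) (m e) d)) < X.len (ch X.act e (e+1) (m e) d) := by
  rcases al_cases i j i (m e - 1) (Or.inl rfl) with h' | h'
  · have := top_desc' h hd hm; rwa [← h'] at this
  · have := top_desc' h.symm hd hm; rwa [← h'] at this

theorem ch_act_inj (i j : Fin (N+3)) (k : ℕ) {d d' : X.W} (h : ch X.act i j k d = ch X.act i j k d') :
    d = d' := by
  induction k with
  | zero => exact h
  | succ k ih =>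
    apply ih
    have := congrArg (X.act (al i j k)) h
    rwa [ch, ch, X.act_act, X.act_act] at this

theorem bot_unique (hm : ∀ j, 2 ≤ m j) (hT : X.Tri) {e e' : Fin (N+3)} {d d' : X.W} (hd : Bot X e d)
    (hd' : Bot X e' d') (h : ch X.act e (e+1) (m e) d = ch X.act e' (e'+1) (m e') d') :
    e = e' ∧ d = d' := by
  have he : e = e' := by
    by_contra hne
    have a1 := top_desc (Or.inl ⟨rfl, rfl⟩) hd (hm e)
    have a2 := top_desc (Or.inr ⟨rfl, rfl⟩) hd (hm e)
    have b1 := top_desc (Or.inl ⟨rfl, rfl⟩) hd' (hm e')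
    have b2 := top_desc (Or.inr ⟨rfl, rfl⟩) hd' (hm e')
    rw [← h] at b1 b2
    by_cases h1 : e + 1 = e'
    · subst h1
      exact hT _ _ _ _ (fin_succ_ne e).symm (fin_succ_ne _).symm (fin_succ_succ_ne e).symm a1 a2 b2
    · exact hT _ _ _ _ (fin_succ_ne e).symm h1 hne a1 a2 b1
  subst he
  exact ⟨rfl, ch_act_inj _ _ _ h⟩

theorem asc_or {i : Fin (N+3)} {v : X.W} :
    (X.len v < X.len (X.act i v) ∧ X.len (X.act i v) = X.len v + 1) ∨
    (X.len (X.act i v) < X.len v ∧ X.len v = X.len (X.act i v) + 1) := by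
  rcases X.len_act i v with h | h <;> omega

end comb

section model
variable {N : ℕ} {m : Fin (N+3) → ℕ} (X : Sys N m) (R : Type) [CommRing R]

def tv (w : X.W) : X.W →₀ R := Finsupp.single w 1

def G (n : ℕ) : Submodule R (X.W →₀ R) :=
  Finsupp.supported R R {w | X.len w < n ∧ (X.len w + n) % 2 = 0}

variable {X R}

theorem tv_mem {n : ℕ} {w : X.W} (h : X.len w < n) (h' : (X.len w + n) % 2 = 0) : tv X R w ∈ G X R n :=
  Finsupp.single_mem_supported R 1 ⟨h, h'⟩

theorem G_mono {n n' : ℕ} (h : n ≤ n') (h' : (n + n') % 2 = 0) : G X R n ≤ G X R n' := by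
  apply Finsupp.supported_mono
  rintro w ⟨h1, h2⟩
  exact ⟨by omega, by omega⟩

theorem G_ind {M' : Type*} [AddCommGroup M'] [Module R M'] (f : (X.W →₀ R) →ₗ[R] M') (F : Submodule R M') {n : ℕ}
    (h : ∀ v, X.len v < n → (X.len v + n) % 2 = 0 → f (tv X R v) ∈ F) (x) (hx : x ∈ G X R n) :
    f x ∈ F := by
  have : G X R n ≤ F.comap f := by
    unfold G
    rw [Finsupp.supported_eq_span_single, Submodule.span_le]
    rintro _ ⟨w, ⟨h1, h2⟩, rfl⟩
    exact h w h1 h2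
  exact this hx

theorem G_eq {M' : Type*} [AddCommGroup M'] [Module R M'] (f g : (X.W →₀ R) →ₗ[R] M') {n : ℕ}
    (h : ∀ v, X.len v < n → (X.len v + n) % 2 = 0 → f (tv X R v) = g (tv X R v)) (x) (hx : x ∈ G X R n) :
    f x = g x := by
  have := G_ind (f - g) ⊥ (n := n) (fun v h1 h2 => by simp [h v h1 h2]) x hx
  rw [Submodule.mem_bot, LinearMap.sub_apply] at this
  exact sub_eq_zero.mp this

def Lx (S : Fin (N+3) → X.W → (X.W →₀ R)) (i : Fin (N+3)) : (X.W →₀ R) →ₗ[R] (X.W →₀ R) :=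
  Finsupp.linearCombination R (S i)

theorem Lx_tv (S : Fin (N+3) → X.W → (X.W →₀ R)) (i : Fin (N+3)) (w : X.W) :
    Lx S i (tv X R w) = S i w := by simp [Lx, tv]

variable (p : Fin (N+3) → ℕ → R)

structure Good (n : ℕ) (S : Fin (N+3) → X.W → (X.W →₀ R)) : Prop where
  asc : ∀ i v, X.len v < n → X.len v < X.len (X.act i v) →
    ∃ κ : Rˣ, S i v - (κ:R) • tv X R (X.act i v) ∈ G X R (X.len v + 1)
  desc : ∀ i v, X.len v < n → X.len (X.act i v) < X.len v → S i v ∈ G X R (X.len v + 1)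
  inv : ∀ i v, X.len v + 1 < n → Lx S i (S i v) = tv X R v
  rel : ∀ e d, Bot X e d → X.len d + m e ≤ n →
    RelV (Lx S) (p e) (m e) (al (e+1) e (X.len d)) (al e (e+1) (X.len d)) (tv X R d) = 0

variable {p} {n : ℕ} {S S' : Fin (N+3) → X.W → (X.W →₀ R)}

theorem Good.val (h : Good p n S) (i : Fin (N+3)) (v : X.W) (hv : X.len v < n) :
    S i v ∈ G X R (X.len v + 3) := by
  rcases asc_or (X := X) (i := i) (v := v) with ⟨h1, h2⟩ | ⟨h1, h2⟩
  · obtain ⟨κ, hκ⟩ := h.asc i v hv h1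
    rw [← sub_add_cancel (S i v) ((κ:R) • tv X R (X.act i v))]
    refine add_mem (G_mono (by omega) (by omega) hκ) (Submodule.smul_mem _ _ (tv_mem (by omega) (by omega)))
  · exact G_mono (by omega) (by omega) (h.desc i v hv h1)

theorem Good.map (h : Good p n S) (i : Fin (N+3)) {k : ℕ} (hk : k ≤ n) {x} (hx : x ∈ G X R k) :
    Lx S i x ∈ G X R (k+1) := by
  refine G_ind _ _ (fun v h1 h2 => ?_) x hx
  rw [Lx_tv]
  exact G_mono (by omega) (by omega) (h.val i v (by omega))

theorem Good.lead (h : Good p n S) (i : Fin (N+3)) {w : X.W} (hw : X.len w < n)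
    (ha : X.len w < X.len (X.act i w)) {x : X.W →₀ R} {κ : Rˣ}
    (hx : x - (κ:R) • tv X R w ∈ G X R (X.len w)) :
    ∃ κ' : Rˣ, Lx S i x - (κ':R) • tv X R (X.act i w) ∈ G X R (X.len w + 1) := by
  obtain ⟨κ', hκ'⟩ := h.asc i w hw ha
  refine ⟨κ * κ', ?_⟩
  have h1 := h.map i (by omega) hx
  rw [map_sub, map_smul, Lx_tv] at h1
  have := add_mem h1 (Submodule.smul_mem _ (κ:R) hκ')
  convert this using 1
  rw [smul_sub, Units.val_mul, mul_smul]; abel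

theorem Good.chain (h : Good p n S) {e i j : Fin (N+3)} (hij : Ed e i j) {d : X.W} (hd : Bot X e d)
    (k : ℕ) (hk : k ≤ m e) (hn : X.len d + k ≤ n) :
    ∃ κ : Rˣ, ch (Op (Lx S)) i j k (tv X R d) - (κ:R) • tv X R (ch X.act i j k d) ∈
      G X R (X.len d + k) := by
  induction k with
  | zero => exact ⟨1, by simp [ch]⟩
  | succ k ih =>
    obtain ⟨κ, hκ⟩ := ih (by omega) (by omega)
    have l1 := bot_len hij hd (k := k) (by omega)
    have l2 := bot_len hij hd hk
    rw [← l1] at hκ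
    rw [ch] at l2
    obtain ⟨κ', h'⟩ := h.lead (al i j k) (by omega) (by omega) hκ
    refine ⟨κ', ?_⟩
    rw [l1] at h'
    exact h'

theorem Good.chain_mem (h : Good p n S) {e i j : Fin (N+3)} (hij : Ed e i j) {d : X.W} (hd : Bot X e d)
    (k : ℕ) (hk : k ≤ m e) (hn : X.len d + k ≤ n) :
    ch (Op (Lx S)) i j k (tv X R d) ∈ G X R (X.len d + k + 2) := by
  obtain ⟨κ, hκ⟩ := h.chain hij hd k hk hn
  rw [← sub_add_cancel (ch (Op (Lx S)) i j k (tv X R d)) ((κ:R) • tv X R (ch X.act i j k d))]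
  have l1 := bot_len hij hd (k := k) (by omega)
  exact add_mem (G_mono (by omega) (by omega) hκ)
    (Submodule.smul_mem _ _ (tv_mem (by omega) (by omega)))

def Agree (n : ℕ) (S S' : Fin (N+3) → X.W → (X.W →₀ R)) : Prop :=
  ∀ i v, X.len v < n → S' i v = S i v

theorem Agree.lx (h : Agree n S S') (i : Fin (N+3)) {k : ℕ} (hk : k ≤ n + 1) {x}
    (hx : x ∈ G X R k) : Lx S' i x = Lx S i x := by
  refine G_eq _ _ (fun v h1 h2 => ?_) x hx
  rw [Lx_tv, Lx_tv]
  exact h i v (by omega)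

theorem Good.chain_congr (h : Good p n S) (hA : Agree n S S') {e i j : Fin (N+3)} (hij : Ed e i j)
    {d : X.W} (hd : Bot X e d) (k : ℕ) (hk : k ≤ m e) (hn : X.len d + k ≤ n) :
    ch (Op (Lx S')) i j k (tv X R d) = ch (Op (Lx S)) i j k (tv X R d) := by
  induction k with
  | zero => rfl
  | succ k ih =>
    rw [ch, ih (by omega) (by omega)]
    exact hA.lx _ (by omega) (h.chain_mem hij hd k (by omega) (by omega))

theorem Good.congr (hm : ∀ j, 2 ≤ m j) (h : Good p n S) (hA : Agree n S S') : Good p n S' where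
  asc i v hv ha := by rw [hA i v hv]; exact h.asc i v hv ha
  desc i v hv ha := by rw [hA i v hv]; exact h.desc i v hv ha
  inv i v hv := by
    rw [hA i v (by omega), ← h.inv i v hv]
    have h1 := h.val i v (by omega)
    exact hA.lx i (by omega) h1
  rel e d hd hn := by
    have hij := Ed.mk e (X.len d)
    rw [← h.rel e d hd hn, relV_split _ _ (hm e), relV_split _ _ (hm e),
      h.chain_congr hA hij hd _ le_rfl hn, h.chain_congr hA hij.symm hd _ le_rfl hn,
      mid_congr _ (Lx S)]
    intro k hk
    exact ⟨h.chain_congr hA hij hd _ (by omega) (by omega),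
      h.chain_congr hA hij.symm hd _ (by omega) (by omega)⟩

end model
end
end HF

namespace HF

noncomputable section
section step
variable {N : ℕ} {m : Fin (N+3) → ℕ} {X : Sys N m} {R : Type} [CommRing R]
variable {p : Fin (N+3) → ℕ → R} {n : ℕ} {S S' : Fin (N+3) → X.W → (X.W →₀ R)}

theorem choose_f (hm : ∀ j, 2 ≤ m j) (hT : X.Tri) (hp0 : ∀ e, IsUnit (p e 0))
    (hpm : ∀ e, IsUnit (p e (m e))) (h : Good p n S) (w : X.W) (hw : X.len w = n + 1) :
    ∃ f : Fin (N+3) → (X.W →₀ R), (∀ i, ∃ κ : Rˣ, f i - (κ:R) • tv X R w ∈ G X R (n+1)) ∧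
      ∀ S', Agree n S S' → (∀ i, X.len (X.act i w) < X.len w → S' i (X.act i w) = f i) →
        ∀ e d, Bot X e d → ch X.act e (e+1) (m e) d = w →
        RelV (Lx S') (p e) (m e) (al (e+1) e (X.len d)) (al e (e+1) (X.len d)) (tv X R d) = 0 := by
  by_cases H : ∃ e d, Bot X e d ∧ ch X.act e (e+1) (m e) d = w
  swap
  · refine ⟨fun _ => tv X R w, fun _ => ⟨1, by simp⟩, ?_⟩
    intro S' _ _ e d hd hdw
    exact absurd ⟨e, d, hd, hdw⟩ H
  obtain ⟨e, d, hd, hdw⟩ := H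
  have hij := Ed.mk e (X.len d)
  set i := al (e+1) e (X.len d) with hi
  set j := al e (e+1) (X.len d) with hj
  have hme := hm e
  have hl : X.len d + m e = n + 1 := by
    rw [← hw, ← hdw, bot_len (Or.inl ⟨rfl, rfl⟩) hd le_rfl]
  obtain ⟨κA, hA⟩ := h.chain hij hd (m e - 1) (by omega) (by omega)
  obtain ⟨κB, hB⟩ := h.chain hij.symm hd (m e - 1) (by omega) (by omega)
  have hAl := ch_last hij hd hme
  have hBl := ch_last hij.symm hd hme
  have dA := top_desc' hij hd hme
  have dB := top_desc' hij.symm hd hme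
  rw [hdw] at hAl hBl dA dB
  rw [← hAl] at hA
  rw [← hBl] at hB
  rw [show X.len d + (m e - 1) = n by omega] at hA hB
  have hne : al i j (m e - 1) ≠ al j i (m e - 1) := al_ne hij.ne _
  set x := al i j (m e - 1) with hx
  set y := al j i (m e - 1) with hy
  set zA := ch (Op (Lx S)) i j (m e - 1) (tv X R d) - (κA:R) • tv X R (X.act x w) with hzA
  set zB := ch (Op (Lx S)) j i (m e - 1) (tv X R d) - (κB:R) • tv X R (X.act y w) with hzB
  set Z := Mid (Lx S) (p e) (m e) i j (tv X R d) with hZ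
  obtain ⟨u0, hu0⟩ := hp0 e
  obtain ⟨um, hum⟩ := hpm e
  have Zmem : Z ∈ G X R (n+1) := by
    apply mid_mem
    intro k hk hk2
    exact ⟨G_mono (by omega) (by omega) (h.chain_mem hij hd k (by omega) (by omega)),
      G_mono (by omega) (by omega) (h.chain_mem hij.symm hd k (by omega) (by omega))⟩
  set V := (um:R) • Lx S x zA + (u0:R) • Lx S y zB + Z with hV
  have Vmem : V ∈ G X R (n+1) :=
    add_mem (add_mem (Submodule.smul_mem _ _ (h.map x le_rfl hA))
      (Submodule.smul_mem _ _ (h.map y le_rfl hB))) Zmem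
  set Y := (-((u0⁻¹ * κB⁻¹ : Rˣ) : R)) • ((um * κA : Rˣ) : R) • tv X R w
    + (-((u0⁻¹ * κB⁻¹ : Rˣ) : R)) • V with hY
  refine ⟨fun l => if l = x then tv X R w else Y, ?_, ?_⟩
  · intro l
    by_cases hl : l = x
    · exact ⟨1, by simp [hl]⟩
    · refine ⟨-(u0⁻¹ * κB⁻¹) * (um * κA), ?_⟩
      beta_reduce
      rw [if_neg hl, hY]
      have : ∀ a b c : X.W →₀ R, a = c → a + b - c = b := by rintro a b c rfl; abel
      rw [this]
      · exact Submodule.smul_mem _ _ Vmem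
      · rw [← mul_smul]; congr 1
  · intro S' hAg hS' e' d' hd' hdw'
    obtain ⟨rfl, rfl⟩ := bot_unique hm hT hd hd' (hdw.trans hdw'.symm)
    have sx := hS' x dA
    have sy := hS' y dB
    beta_reduce at sx sy
    rw [if_pos rfl] at sx
    rw [if_neg hne.symm] at sy
    rw [relV_split _ _ hme, ← hi, ← hj]
    have mA : ch (Op (Lx S')) i j (m e) (tv X R d) = (κA:R) • tv X R w + Lx S x zA := by
      obtain ⟨k, hk⟩ : ∃ k, m e = k + 1 := ⟨m e - 1, by omega⟩
      have : ch (Op (Lx S')) i j (m e) (tv X R d) =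
          Lx S' x (ch (Op (Lx S')) i j (m e - 1) (tv X R d)) := by
        rw [hx, hk]; rfl
      rw [this, h.chain_congr hAg hij hd _ (by omega) (by omega),
        ← add_sub_cancel ((κA:R) • tv X R (X.act x w)) (ch (Op (Lx S)) i j (m e - 1) (tv X R d)),
        ← hzA, map_add, map_smul, Lx_tv, sx, hAg.lx x (by omega) hA]
    have mB : ch (Op (Lx S')) j i (m e) (tv X R d) = (κB:R) • Y + Lx S y zB := by
      obtain ⟨k, hk⟩ : ∃ k, m e = k + 1 := ⟨m e - 1, by omega⟩
      have : ch (Op (Lx S')) j i (m e) (tv X R d) =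
          Lx S' y (ch (Op (Lx S')) j i (m e - 1) (tv X R d)) := by
        rw [hy, hk]; rfl
      rw [this, h.chain_congr hAg hij.symm hd _ (by omega) (by omega),
        ← add_sub_cancel ((κB:R) • tv X R (X.act y w)) (ch (Op (Lx S)) j i (m e - 1) (tv X R d)),
        ← hzB, map_add, map_smul, Lx_tv, sy, hAg.lx y (by omega) hB]
    have mZ : Mid (Lx S') (p e) (m e) i j (tv X R d) = Z := by
      apply mid_congr
      intro k hk
      exact ⟨h.chain_congr hAg hij hd _ (by omega) (by omega),
        h.chain_congr hAg hij.symm hd _ (by omega) (by omega)⟩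
    have c1 : (u0:R) * ((κB:R) * ((u0⁻¹ * κB⁻¹ : Rˣ) : R)) = 1 := by
      have : u0 * (κB * (u0⁻¹ * κB⁻¹)) = 1 := by
        rw [mul_comm u0⁻¹, mul_inv_cancel_left, mul_inv_cancel]
      rw [← Units.val_mul, ← Units.val_mul, this, Units.val_one]
    have c2 : (u0:R) • (κB:R) • Y = - ((um:R) • (κA:R) • tv X R w + V) := by
      rw [hY, ← smul_add, ← mul_smul, ← mul_smul, mul_neg, mul_assoc, c1, neg_smul, one_smul,
        Units.val_mul, mul_smul]
    rw [mA, mB, mZ, ← hum, ← hu0, smul_add, smul_add, c2, hV]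
    abel

theorem step_exists (hm : ∀ j, 2 ≤ m j) (hT : X.Tri) (hp0 : ∀ e, IsUnit (p e 0))
    (hpm : ∀ e, IsUnit (p e (m e))) (h : Good p n S) : ∃ S', Good p (n+1) S' ∧ Agree n S S' := by
  choose! F F1 F2 using choose_f hm hT hp0 hpm h
  -- leading data one level down
  have hdesc : ∀ i v, X.len v = n → X.len (X.act i v) < X.len v → ∃ x : X.W →₀ R,
      x ∈ G X R (n+1) ∧ ∀ S', Agree n S S' → S' i v = x → Lx S' i (S i (X.act i v)) = tv X R (X.act i v) := by
    intro i v hv hd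
    have hl : X.len v = X.len (X.act i v) + 1 := by
      rcases X.len_act i v with h | h <;> omega
    obtain ⟨κ, hκ⟩ := h.asc i (X.act i v) (by omega) (by rw [X.act_act]; omega)
    rw [X.act_act, show X.len (X.act i v) + 1 = n by omega] at hκ
    refine ⟨((κ⁻¹ : Rˣ) : R) • (tv X R (X.act i v) - Lx S i (S i (X.act i v) - (κ:R) • tv X R v)), ?_, ?_⟩
    · exact Submodule.smul_mem _ _ (sub_mem (tv_mem (by omega) (by omega)) (h.map i le_rfl hκ))
    · intro S' hA hS'
      rw [← add_sub_cancel ((κ:R) • tv X R v) (S i (X.act i v)), map_add, map_smul, Lx_tv, hS',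
        hA.lx i (by omega) hκ, ← mul_smul, Units.mul_inv, one_smul]
      exact sub_add_cancel _ _
  choose! D D1 D2 using hdesc
  classical
  let S' : Fin (N+3) → X.W → (X.W →₀ R) := fun i v =>
    if X.len v < n then S i v else if X.len (X.act i v) < X.len v then D i v else F (X.act i v) i
  have hA : Agree n S S' := fun i v hv => by simp only [S', if_pos hv]
  have h' := h.congr hm hA
  refine ⟨S', ?_, hA⟩
  have e1 : ∀ i v, X.len v = n → X.len (X.act i v) < X.len v → S' i v = D i v := by
    intro i v hv hd
    simp only [S']; rw [if_neg (by omega), if_pos hd]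
  have e2 : ∀ i v, X.len v = n → X.len v < X.len (X.act i v) → S' i v = F (X.act i v) i := by
    intro i v hv hd
    simp only [S']; rw [if_neg (by omega), if_neg (by omega)]
  constructor
  · intro i v hv ha
    by_cases hv' : X.len v < n
    · exact h'.asc i v hv' ha
    · have hn : X.len v = n := by omega
      rw [e2 i v hn ha, hn]
      exact F1 _ (by rcases X.len_act i v with h | h <;> omega) i
  · intro i v hv ha
    by_cases hv' : X.len v < n
    · exact h'.desc i v hv' ha
    · have hn : X.len v = n := by omega
      rw [e1 i v hn ha, hn]
      exact D1 i v hn ha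
  · intro i v hv
    by_cases hv' : X.len v + 1 < n
    · exact h'.inv i v hv'
    have hn : X.len v + 1 = n := by omega
    rcases asc_or (X := X) (i := i) (v := v) with ⟨h1, h2⟩ | ⟨h1, h2⟩
    · rw [hA i v (by omega)]
      have := D2 i (X.act i v) (by omega) (by rw [X.act_act]; omega) S' hA
        (e1 i _ (by omega) (by rw [X.act_act]; omega))
      rwa [X.act_act] at this
    · obtain ⟨κ, hκ⟩ := h'.asc i (X.act i v) (by omega) (by rw [X.act_act]; omega)
      have q := h'.inv i (X.act i v) (by omega)
      have a0 := X.act_act i v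
      set u := X.act i v
      rw [a0] at hκ
      set y := S' i u - (κ:R) • tv X R v with hy
      have ey : S' i u = (κ:R) • tv X R v + y := by rw [hy]; abel
      have yy : Lx S' i (Lx S' i y) = y := by
        refine G_eq (Lx S' i ∘ₗ Lx S' i) LinearMap.id (fun v' h1 h2 => ?_) y hκ
        simp only [LinearMap.comp_apply, Lx_tv, LinearMap.id_apply]
        exact h'.inv i v' (by omega)
      have q2 := congrArg (Lx S' i) q
      rw [ey, map_add, map_add, yy, map_smul, map_smul, Lx_tv, Lx_tv, ey] at q2
      have q3 := add_right_cancel q2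
      have := congrArg (fun x => ((κ⁻¹ : Rˣ) : R) • x) q3
      simpa [← mul_smul] using this
  · intro e d hd hn
    by_cases hn' : X.len d + m e ≤ n
    · exact h'.rel e d hd hn'
    have hl := bot_len (Or.inl ⟨rfl, rfl⟩) hd (le_refl (m e))
    refine F2 (ch X.act e (e+1) (m e) d) (by omega) S' hA ?_ e d hd rfl
    intro i hi
    have := X.len_act i (ch X.act e (e+1) (m e) d)
    rw [e2 i _ (by omega) (by rw [X.act_act]; exact hi), X.act_act]

theorem good_zero : ∃ S : Fin (N+3) → X.W → (X.W →₀ R), (∀ j, 2 ≤ m j) → Good p 0 S := by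
  refine ⟨fun _ _ => 0, fun hm => ⟨?_, ?_, ?_, ?_⟩⟩
  · intro i v h; omega
  · intro i v h; omega
  · intro i v h; omega
  · intro e d _ h; have := hm e; omega

theorem model_exists (X : Sys N m) (p : Fin (N+3) → ℕ → R) (hm : ∀ j, 2 ≤ m j) (hT : X.Tri) (hp0 : ∀ e, IsUnit (p e 0))
    (hpm : ∀ e, IsUnit (p e (m e))) :
    ∃ S : Fin (N+3) → X.W → (X.W →₀ R), ∀ n, Good p n S := by
  obtain ⟨S0, h0⟩ := good_zero (X := X) (p := p)
  have st : ∀ n (S : {S : Fin (N+3) → X.W → (X.W →₀ R) // Good p n S}),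
      ∃ S' : {S : Fin (N+3) → X.W → (X.W →₀ R) // Good p (n+1) S}, Agree n S.1 S'.1 := by
    rintro n ⟨S, hS⟩
    obtain ⟨S', h1, h2⟩ := step_exists hm hT hp0 hpm hS
    exact ⟨⟨S', h1⟩, h2⟩
  choose st hst using st
  let Q : ∀ n, {S : Fin (N+3) → X.W → (X.W →₀ R) // Good p n S} :=
    fun n => Nat.rec ⟨S0, h0 hm⟩ (fun n S => st n S) n
  have hQ : ∀ n, Agree n (Q n).1 (Q (n+1)).1 := fun n => hst n (Q n)
  have hQ2 : ∀ n k i v, X.len v < n → (Q (n+k)).1 i v = (Q n).1 i v := by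
    intro n k i v hv
    induction k with
    | zero => rfl
    | succ k ih => rw [← ih]; exact hQ (n+k) i v (by omega)
  refine ⟨fun i v => (Q (X.len v + 1)).1 i v, fun n => (Q n).2.congr hm ?_⟩
  intro i v hv
  obtain ⟨k, rfl⟩ : ∃ k, n = X.len v + 1 + k := ⟨n - (X.len v + 1), by omega⟩
  exact (hQ2 (X.len v + 1) k i v (by omega)).symm

/-- consequences -/
theorem model_inv (h : ∀ n, Good p n S) (i : Fin (N+3)) (x : X.W →₀ R) : Lx S i (Lx S i x) = x := by
  have : Lx S i ∘ₗ Lx S i = LinearMap.id := by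
    apply Finsupp.lhom_ext'
    intro w
    apply LinearMap.ext_ring
    have := (h (X.len w + 2)).inv i w (by omega)
    rw [← Lx_tv S i w] at this
    exact this
  exact congrArg (fun f : (X.W →₀ R) →ₗ[R] (X.W →₀ R) => f x) this

theorem model_rel (h : ∀ n, Good p n S) (e : Fin (N+3)) : ∀ n (w : X.W), X.len w = n →
    PV (p e) (m e) (Lx S (al e (e+1) n) * Lx S (al (e+1) e n)) (tv X R w) = 0 := by
  intro n
  induction n using Nat.strong_induction_on with
  | _ n ih =>
  intro w hw
  by_cases hb : Bot X e w
  · rw [← relV_iff (Lx S) (model_inv h), ← hw]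
    exact (h _).rel e w hb le_rfl
  have hs : ∃ s, (s = e ∨ s = e+1) ∧ X.len (X.act s w) < X.len w := by
    unfold Bot at hb
    rw [not_and_or] at hb
    rcases hb with hb | hb
    · exact ⟨e, Or.inl rfl, by rcases X.len_act e w with h | h <;> omega⟩
    · exact ⟨e+1, Or.inr rfl, by rcases X.len_act (e+1) w with h | h <;> omega⟩
  obtain ⟨s, hs, hd⟩ := hs
  have hl : X.len w = X.len (X.act s w) + 1 := by rcases X.len_act s w with h | h <;> omega
  obtain ⟨κ, hκ⟩ := (h n).asc s (X.act s w) (by omega) (by rw [X.act_act]; omega)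
  rw [X.act_act, ← hl] at hκ
  obtain ⟨Q, hQ⟩ := PV_lin (p e) (m e) (Lx S (al e (e+1) n) * Lx S (al (e+1) e n))
  have h1 := G_ind Q ⊥ (fun v h1 h2 => by
    rw [Submodule.mem_bot, ← hQ]
    have := ih (X.len v) (by omega) v rfl
    rwa [al_par e (e+1) (k := X.len v) (l := n) (by omega),
      al_par (e+1) e (k := X.len v) (l := n) (by omega)] at this) _ hκ
  rw [Submodule.mem_bot, map_sub, map_smul, ← hQ, ← hQ, ← Lx_tv S] at h1
  rw [PV_comm (Lx S) (model_inv h) _ _ _ _ s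
    (by rcases hs with h | h; exacts [(al_cases _ _ _ _ (Or.inr h)), (al_cases _ _ _ _ (Or.inl h))])] at h1
  have h2 := ih (X.len (X.act s w)) (by omega) (X.act s w) rfl
  rw [al_par' e (e+1) (k := X.len (X.act s w)) (l := n) (by omega),
      al_par' (e+1) e (k := X.len (X.act s w)) (l := n) (by omega)] at h2
  rw [h2, map_zero, zero_sub, neg_eq_zero] at h1
  have := congrArg (fun x => ((κ⁻¹ : Rˣ) : R) • x) h1
  simpa [← mul_smul] using this

end step
end
end HF

namespace HF

noncomputable section
section spanning
variable {N : ℕ} {m : Fin (N+3) → ℕ} (X : Sys N m) {R M : Type*} [CommRing R]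
variable [AddCommGroup M] [Module R M]

def Sim (F : Submodule R M) (x y : M) : Prop := ∃ κ : Rˣ, x - (κ:R) • y ∈ F

theorem Sim.refl (F : Submodule R M) (x : M) : Sim F x x := ⟨1, by simp⟩
theorem Sim.symm {F : Submodule R M} {x y : M} (h : Sim F x y) : Sim F y x := by
  obtain ⟨κ, h⟩ := h
  refine ⟨κ⁻¹, ?_⟩
  have := F.smul_mem (-((κ⁻¹ : Rˣ) : R)) h
  convert this using 1
  rw [smul_sub, neg_smul, neg_smul, ← mul_smul, Units.inv_mul, one_smul]; abel
theorem Sim.trans {F : Submodule R M} {x y z : M} (h : Sim F x y) (h' : Sim F y z) : Sim F x z := by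
  obtain ⟨κ, h⟩ := h
  obtain ⟨κ', h'⟩ := h'
  refine ⟨κ * κ', ?_⟩
  have := add_mem h (F.smul_mem (κ:R) h')
  convert this using 1
  rw [smul_sub, Units.val_mul, mul_smul]; abel
theorem Sim.map {F F' : Submodule R M} {x y : M} (h : Sim F x y) (f : M →ₗ[R] M)
    (hf : ∀ x ∈ F, f x ∈ F') : Sim F' (f x) (f y) := by
  obtain ⟨κ, h⟩ := h
  exact ⟨κ, by have := hf _ h; rwa [map_sub, map_smul] at this⟩
theorem Sim.mem {F F' : Submodule R M} {x y : M} (h : Sim F x y) (hF : F ≤ F') (hy : y ∈ F') :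
    x ∈ F' := by
  obtain ⟨κ, h⟩ := h
  have := add_mem (hF h) (F'.smul_mem (κ:R) hy)
  rwa [sub_add_cancel] at this

variable (L : Fin (N+3) → M →ₗ[R] M) (n0 : M)

def wop (l : List (Fin (N+3))) : M := l.foldr (fun i x => L i x) n0
def wact (l : List (Fin (N+3))) : X.W := l.foldr X.act X.one

def chl (i j : Fin (N+3)) : ℕ → List (Fin (N+3))
  | 0 => []
  | k+1 => al i j k :: chl i j k

theorem chl_length (i j : Fin (N+3)) (k : ℕ) : (chl i j k).length = k := by
  induction k with
  | zero => rfl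
  | succ k ih => simp [chl, ih]

theorem wop_chl (i j : Fin (N+3)) (k : ℕ) (t : List (Fin (N+3))) :
    wop L n0 (chl i j k ++ t) = ch (Op L) i j k (wop L n0 t) := by
  induction k with
  | zero => rfl
  | succ k ih => rw [ch, ← ih]; rfl

theorem wact_chl (i j : Fin (N+3)) (k : ℕ) (t : List (Fin (N+3))) :
    wact X (chl i j k ++ t) = ch X.act i j k (wact X t) := by
  induction k with
  | zero => rfl
  | succ k ih => rw [ch, ← ih]; rfl

def Red (l : List (Fin (N+3))) : Prop := l.length = X.len (wact X l)

theorem len_wact_le (l : List (Fin (N+3))) : X.len (wact X l) ≤ l.length := by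
  induction l with
  | nil => exact X.len_one.le
  | cons i t ih =>
    have : wact X (i :: t) = X.act i (wact X t) := rfl
    rw [this, List.length_cons]
    rcases X.len_act i (wact X t) with h | h <;> omega

theorem wact_cons (i : Fin (N+3)) (t : List (Fin (N+3))) : wact X (i :: t) = X.act i (wact X t) := rfl

theorem Red.tail {i : Fin (N+3)} {t : List (Fin (N+3))} (h : Red X (i :: t)) : Red X t ∧
    X.len (X.act i (wact X (i :: t))) < X.len (wact X (i :: t)) := by
  unfold Red at h ⊢
  rw [wact_cons, List.length_cons] at h
  rw [wact_cons, X.act_act]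
  have := len_wact_le X t
  rcases X.len_act i (wact X t) with h' | h' <;> omega

theorem exists_red : ∀ n (w : X.W), X.len w = n → ∃ l, wact X l = w ∧ Red X l := by
  intro n
  induction n with
  | zero =>
    intro w hw
    exact ⟨[], (X.len_zero w hw).symm, X.len_one.symm⟩
  | succ n ih =>
    intro w hw
    obtain ⟨i, hi⟩ := X.exists_desc w (by omega)
    have := X.len_act i w
    obtain ⟨l, h1, h2⟩ := ih (X.act i w) (by omega)
    refine ⟨i :: l, by rw [wact_cons, h1, X.act_act], ?_⟩
    unfold Red at h2 ⊢
    rw [wact_cons, h1, X.act_act, List.length_cons, h2, h1]; omega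

variable (R) in
def Fw (n : ℕ) : Submodule R M := Submodule.span R {x | ∃ l : List (Fin (N+3)), l.length < n ∧ wop L n0 l = x}

theorem wop_mem {l : List (Fin (N+3))} {n : ℕ} (h : l.length < n) : wop L n0 l ∈ Fw R L n0 n :=
  Submodule.subset_span ⟨l, h, rfl⟩

theorem Fw_mono {n n' : ℕ} (h : n ≤ n') : Fw R L n0 n ≤ Fw R L n0 n' := by
  apply Submodule.span_mono
  rintro x ⟨l, h1, h2⟩
  exact ⟨l, by omega, h2⟩

theorem Fw_map (i : Fin (N+3)) {n : ℕ} : ∀ x ∈ Fw R L n0 n, L i x ∈ Fw R L n0 (n+1) := by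
  have : Fw R L n0 n ≤ (Fw R L n0 (n+1)).comap (L i) := by
    unfold Fw
    rw [Submodule.span_le]
    rintro x ⟨l, h1, rfl⟩
    exact Submodule.subset_span ⟨i :: l, by simpa using h1, rfl⟩
  exact this

variable {L n0 X} {p : Fin (N+3) → ℕ → R}

theorem rel_sim (hm : ∀ j, 2 ≤ m j) (hp0 : ∀ e, IsUnit (p e 0)) (hpm : ∀ e, IsUnit (p e (m e)))
    (hrel : ∀ l e, RelV L (p e) (m e) (al (e+1) e l.length) (al e (e+1) l.length) (wop L n0 l) = 0)
    (e i j : Fin (N+3)) (hij : Ed e i j) (t : List (Fin (N+3))) :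
    Sim (Fw R L n0 (t.length + m e)) (wop L n0 (chl i j (m e) ++ t)) (wop L n0 (chl j i (m e) ++ t)) := by
  obtain ⟨u0, hu0⟩ := hp0 e
  obtain ⟨um, hum⟩ := hpm e
  have h := hrel t e
  set x := al (e+1) e t.length with hx
  set y := al e (e+1) t.length with hy
  have key : Sim (Fw R L n0 (t.length + m e)) (wop L n0 (chl x y (m e) ++ t))
      (wop L n0 (chl y x (m e) ++ t)) := by
    rw [relV_split _ _ (hm e), ← wop_chl, ← wop_chl, ← hum, ← hu0] at h
    have mm : Mid L (p e) (m e) x y (wop L n0 t) ∈ Fw R L n0 (t.length + m e) := by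
      apply mid_mem
      intro k hk _
      rw [← wop_chl, ← wop_chl]
      constructor <;> apply wop_mem <;> rw [List.length_append, chl_length] <;> omega
    refine ⟨-(um⁻¹ * u0), ?_⟩
    have := Submodule.smul_mem _ (-((um⁻¹ : Rˣ) : R)) mm
    convert this using 1
    have h2 := congrArg (fun x => ((um⁻¹ : Rˣ) : R) • x) h
    simp only [smul_add, smul_zero, ← mul_smul, Units.inv_mul, one_smul] at h2
    rw [Units.val_neg, Units.val_mul, neg_smul, neg_smul, sub_neg_eq_add]
    exact eq_neg_of_add_eq_zero_left h2
  have hxy : (i = x ∧ j = y) ∨ (i = y ∧ j = x) := by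
    rw [hx, hy]; unfold al
    rcases hij with ⟨rfl, rfl⟩ | ⟨rfl, rfl⟩ <;> split_ifs <;> simp
  rcases hxy with ⟨h1, h2⟩ | ⟨h1, h2⟩
  · rw [h1, h2]; exact key
  · rw [h1, h2]; exact key.symm

theorem matsumoto (hm : ∀ j, 2 ≤ m j) (hp0 : ∀ e, IsUnit (p e 0)) (hpm : ∀ e, IsUnit (p e (m e)))
    (hrel : ∀ l e, RelV L (p e) (m e) (al (e+1) e l.length) (al e (e+1) l.length) (wop L n0 l) = 0) :
    ∀ n l l', l.length = n → Red X l → Red X l' → wact X l = wact X l' →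
      Sim (Fw R L n0 n) (wop L n0 l) (wop L n0 l') := by
  intro n
  induction n with
  | zero =>
    intro l l' hl h h' e
    have : l'.length = 0 := by unfold Red at h h'; rw [← e] at h'; omega
    rw [List.length_eq_zero_iff.mp hl, List.length_eq_zero_iff.mp this]
    exact Sim.refl _ _
  | succ n ih =>
    have same : ∀ i t t', (i :: t : List _).length = n + 1 → Red X (i :: t) → Red X (i :: t') →
        wact X (i :: t) = wact X (i :: t') → Sim (Fw R L n0 (n+1)) (wop L n0 (i :: t)) (wop L n0 (i :: t')) := by
      intro i t t' hl h h' e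
      refine (ih t t' (by simpa using hl) h.tail.1 h'.tail.1 ?_).map (L i) (Fw_map L n0 i)
      have := congrArg (X.act i) e
      rwa [wact_cons, wact_cons, X.act_act, X.act_act] at this
    intro l l' hl h h' e
    have hl' : l'.length = n + 1 := by unfold Red at h h'; rw [← e] at h'; omega
    obtain ⟨i, t, rfl⟩ := List.exists_cons_of_length_eq_add_one hl
    obtain ⟨j, t', rfl⟩ := List.exists_cons_of_length_eq_add_one hl'
    by_cases hij : i = j
    · subst hij; exact same i t t' hl h h' e
    have di := h.tail.2
    have dj := h'.tail.2
    rw [← e] at dj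
    obtain ⟨ed, hed⟩ := X.pair i j _ hij di dj
    have hed : Ed ed i j := hed
    have hdd : ∃ d, Bot X ed d ∧ ch X.act ed (ed+1) (m ed) d = wact X (i :: t) := by
      rcases id hed with ⟨rfl, rfl⟩ | ⟨rfl, rfl⟩
      · obtain ⟨d, h1, h2, h3⟩ := X.down _ _ di dj
        exact ⟨d, ⟨h1, h2⟩, h3⟩
      · obtain ⟨d, h1, h2, h3⟩ := X.down _ _ dj di
        exact ⟨d, ⟨h1, h2⟩, h3⟩
    obtain ⟨d, hd, hdw⟩ := hdd
    obtain ⟨td, htd, hrd⟩ := exists_red X _ d rfl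
    -- words with prescribed first letter
    have words : ∀ x y, Ed ed x y → Red X (chl x y (m ed) ++ td) ∧
        wact X (chl x y (m ed) ++ td) = wact X (i :: t) ∧ (chl x y (m ed) ++ td).length = n + 1 := by
      intro x y hxy
      have hw : wact X (chl x y (m ed) ++ td) = wact X (i :: t) := by
        rw [wact_chl, htd, bot_top hxy hd, hdw]
      have hlen : (chl x y (m ed) ++ td).length = n + 1 := by
        rw [List.length_append, chl_length]
        have h1 := bot_len hxy hd le_rfl
        rw [bot_top hxy hd, hdw] at h1
        unfold Red at hrd h
        rw [htd] at hrd
        omega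
      refine ⟨?_, hw, hlen⟩
      unfold Red at h ⊢
      rw [hw, hlen, ← h, hl]
    have hmed := hm ed
    have cons : ∀ x y, chl x y (m ed) ++ td = al x y (m ed - 1) :: (chl x y (m ed - 1) ++ td) := by
      intro x y
      obtain ⟨k, hk⟩ : ∃ k, m ed = k + 1 := ⟨m ed - 1, by omega⟩
      rw [hk]; rfl
    have htm : td.length + m ed = n + 1 := by
      have := (words i j hed).2.2
      rw [List.length_append, chl_length] at this; omega
    have fin : ∀ x y, Ed ed x y → i = al x y (m ed - 1) → j = al y x (m ed - 1) →
        Sim (Fw R L n0 (n+1)) (wop L n0 (i :: t)) (wop L n0 (j :: t')) := by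
      intro x y hxy hi hj
      have w1 := words x y hxy
      have w2 := words y x hxy.symm
      have r := rel_sim hm hp0 hpm hrel ed x y hxy td
      rw [htm] at r
      rw [cons x y, ← hi] at w1 r
      rw [cons y x, ← hj] at w2 r
      exact ((same i _ _ hl h w1.1 w1.2.1.symm).trans r).trans
        (same j _ _ w2.2.2 w2.1 h' (w2.2.1.trans e))
    rcases al_cases i j i (m ed - 1) (Or.inl rfl) with hi | hi
    · refine fin i j hed hi ?_
      rcases al_cases i j j (m ed - 1) (Or.inr rfl) with hj | hj
      · exact absurd (hi.trans hj.symm) hij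
      · exact hj
    · refine fin j i hed.symm hi ?_
      rcases al_cases i j j (m ed - 1) (Or.inr rfl) with hj | hj
      · exact hj
      · exact absurd (hi.trans hj.symm) hij

theorem nonred (hm : ∀ j, 2 ≤ m j) (hp0 : ∀ e, IsUnit (p e 0)) (hpm : ∀ e, IsUnit (p e (m e)))
    (hL : ∀ i x, L i (L i x) = x)
    (hrel : ∀ l e, RelV L (p e) (m e) (al (e+1) e l.length) (al e (e+1) l.length) (wop L n0 l) = 0)
    (l : List (Fin (N+3))) (h : ¬ Red X l) : wop L n0 l ∈ Fw R L n0 l.length := by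
  induction l with
  | nil => exact absurd X.len_one.symm h
  | cons i t ih =>
    by_cases ht : Red X t
    swap
    · exact Fw_map L n0 i _ (ih ht)
    have hd : X.len (X.act i (wact X t)) < X.len (wact X t) := by
      unfold Red at h ht
      rw [wact_cons, List.length_cons] at h
      rcases X.len_act i (wact X t) with h' | h' <;> omega
    obtain ⟨t', h1, h2⟩ := exists_red X _ (X.act i (wact X t)) rfl
    have hlen := X.len_act i (wact X t)
    have hw : wact X (i :: t') = wact X t := by rw [wact_cons, h1, X.act_act]
    have h2' : t'.length = X.len (X.act i (wact X t)) := by unfold Red at h2; rw [h2, h1]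
    have h3 : Red X (i :: t') := by
      unfold Red
      rw [hw, List.length_cons]; omega
    have s := (matsumoto (X := X) hm hp0 hpm hrel _ t (i :: t') rfl ht h3 hw.symm).map (L i)
      (Fw_map L n0 i)
    refine s.mem (Fw_mono L n0 (by simp)) ?_
    have : L i (wop L n0 (i :: t')) = wop L n0 t' := hL _ _
    rw [this]
    apply wop_mem
    unfold Red at ht
    rw [List.length_cons]; omega

theorem spanning (X : Sys N m) (hm : ∀ j, 2 ≤ m j) (hp0 : ∀ e, IsUnit (p e 0)) (hpm : ∀ e, IsUnit (p e (m e)))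
    (hL : ∀ i x, L i (L i x) = x)
    (hrel : ∀ l e, RelV L (p e) (m e) (al (e+1) e l.length) (al e (e+1) l.length) (wop L n0 l) = 0)
    (wd : X.W → List (Fin (N+3))) (hwd : ∀ w, wact X (wd w) = w ∧ Red X (wd w)) :
    ∀ l, wop L n0 l ∈ Submodule.span R (Set.range fun w => wop L n0 (wd w)) := by
  have : ∀ n l, l.length = n →
      wop L n0 l ∈ Submodule.span R (Set.range fun w => wop L n0 (wd w)) := by
    intro n
    induction n using Nat.strong_induction_on with
    | _ n ih =>
    intro l hl
    have hF : Fw R L n0 n ≤ Submodule.span R (Set.range fun w => wop L n0 (wd w)) := by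
      unfold Fw
      rw [Submodule.span_le]
      rintro x ⟨l', h1, rfl⟩
      exact ih _ h1 l' rfl
    by_cases h : Red X l
    · refine (matsumoto (X := X) hm hp0 hpm hrel n l (wd (wact X l)) hl h (hwd _).2 (hwd _).1.symm).mem hF ?_
      exact Submodule.subset_span ⟨_, rfl⟩
    · apply hF
      rw [← hl]
      exact nonred hm hp0 hpm hL hrel l h
  exact fun l => this _ l rfl

end spanning

section lead
variable {N : ℕ} {m : Fin (N+3) → ℕ} {X : Sys N m} {R : Type} [CommRing R]
variable {p : Fin (N+3) → ℕ → R} {S : Fin (N+3) → X.W → (X.W →₀ R)}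

theorem word_lead (h : ∀ n, Good p n S) (l : List (Fin (N+3))) (hl : Red X l) :
    ∃ κ : Rˣ, wop (Lx S) (tv X R X.one) l - (κ:R) • tv X R (wact X l) ∈ G X R l.length := by
  induction l with
  | nil => exact ⟨1, by simp [wop, wact]⟩
  | cons i t ih =>
    obtain ⟨ht, hd⟩ := hl.tail
    obtain ⟨κ, hκ⟩ := ih ht
    rw [wact_cons, X.act_act] at hd
    have ht' : t.length = X.len (wact X t) := ht
    rw [ht'] at hκ
    obtain ⟨κ', h'⟩ := (h _).lead i (Nat.lt_succ_self _) hd hκ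
    refine ⟨κ', ?_⟩
    rw [List.length_cons, ht']
    exact h'

end lead
end
end HF

namespace HF

noncomputable section
section gseq

theorem pprod_last {M : Type*} [Monoid M] {n : ℕ} (c : Fin n → M) :
    Fin.partialProd c (Fin.last n) = (List.ofFn c).prod := by
  unfold Fin.partialProd
  rw [List.take_of_length_le (by simp)]

theorem exists_gseq {M : Type*} [Monoid M] {n : ℕ} (c : Fin (n+1) → M) (h : (List.ofFn c).prod = 1) :
    ∃ g : Fin (n+1) → M, g 0 = 1 ∧ ∀ i, g i * c i = g (i+1) := by
  refine ⟨fun i => Fin.partialProd c i.castSucc, by simp, fun i => ?_⟩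
  simp only
  rw [← Fin.partialProd_succ]
  by_cases hi : i = Fin.last n
  · subst hi
    rw [Fin.last_add_one, Fin.castSucc_zero, Fin.partialProd_zero, Fin.succ_last]
    rw [← h, pprod_last]
  · congr 1
    ext
    rw [Fin.val_succ, Fin.val_castSucc, Fin.val_add_one_of_lt (Fin.lt_last_iff_ne_last.2 hi)]

theorem prod_of_gseq {M : Type*} [Monoid M] {n : ℕ} (c g : Fin (n+1) → M) (h0 : g 0 = 1)
    (h : ∀ i, g i * c i = g (i+1)) : (List.ofFn c).prod = 1 := by
  have key : ∀ i : Fin (n+1), Fin.partialProd c i.castSucc = g i := by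
    intro i
    induction i using Fin.induction with
    | zero => simp [h0]
    | succ i ih =>
      have := h i.castSucc
      rw [← ih, ← Fin.partialProd_succ] at this
      rw [Fin.castSucc_succ, this, Fin.coeSucc_eq_succ]
  have h1 : (List.ofFn c).prod = Fin.partialProd c (Fin.last (n+1)) := (pprod_last c).symm
  rw [h1, ← Fin.succ_last, Fin.partialProd_succ, key, h, Fin.last_add_one, h0]

theorem gseq_unique {M : Type*} [Monoid M] {n : ℕ} (c g g' : Fin (n+1) → M) (h0 : g 0 = 1)
    (h : ∀ i, g i * c i = g (i+1)) (h0' : g' 0 = 1)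
    (h' : ∀ i, g' i * c i = g' (i+1)) (i) : g i = g' i := by
  induction i using Fin.induction with
  | zero => rw [h0, h0']
  | succ i ih => rw [← Fin.coeSucc_eq_succ, ← h, ← h', ih]

end gseq

section HH
variable {N : ℕ} {m : Fin (N+3) → ℕ} {R H : Type} [CommRing R] [Ring H] [Algebra R H]

def Lh (g h : Fin (N+3) → H) (i : Fin (N+3)) : (H × H) →ₗ[R] (H × H) :=
  LinearMap.prod ((LinearMap.mulLeft R (h i)).comp (LinearMap.snd R H H))
    ((LinearMap.mulLeft R (g i)).comp (LinearMap.fst R H H))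

theorem Lh_apply (g h : Fin (N+3) → H) (i : Fin (N+3)) (x : H × H) :
    Lh (R := R) g h i x = (h i * x.2, g i * x.1) := rfl

variable {g h c : Fin (N+3) → H} {p : Fin (N+3) → ℕ → R}

theorem Lh_inv (hgh : ∀ i, g i * h i = 1) (hhg : ∀ i, h i * g i = 1) (i : Fin (N+3)) (x : H × H) :
    Lh (R := R) g h i (Lh (R := R) g h i x) = x := by
  simp only [Lh_apply, ← mul_assoc, hgh, hhg, one_mul]

theorem Lh_word (l : List (Fin (N+3))) :
    (l.length % 2 = 0 → (wop (Lh (R := R) g h) (1,0) l).2 = 0) ∧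
    (l.length % 2 = 1 → (wop (Lh (R := R) g h) (1,0) l).1 = 0) := by
  induction l with
  | nil => simp [wop]
  | cons i t ih =>
    have : wop (Lh (R := R) g h) (1,0) (i :: t) = Lh (R := R) g h i (wop (Lh (R := R) g h) (1,0) t) := rfl
    rw [this, Lh_apply, List.length_cons]
    constructor
    · intro hh
      simp only
      rw [ih.2 (by omega), mul_zero]
    · intro hh
      simp only
      rw [ih.1 (by omega), mul_zero]

theorem Lh_rel (hgh : ∀ i, g i * h i = 1) (hhg : ∀ i, h i * g i = 1)
    (hgc : ∀ i, g i * c i = g (i+1))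
    (hP : ∀ e, ∑ a ∈ Finset.range (m e + 1), p e a • c e ^ a = 0)
    (l : List (Fin (N+3))) (e : Fin (N+3)) :
    RelV (Lh (R := R) g h) (p e) (m e) (al (e+1) e l.length) (al e (e+1) l.length)
      (wop (Lh (R := R) g h) (1,0) l) = 0 := by
  rw [relV_iff _ (Lh_inv hgh hhg)]
  obtain ⟨hw0, hw1⟩ := Lh_word (R := R) (g := g) (h := h) l
  set v := wop (Lh (R := R) g h) (1,0) l
  have hc : c e = h e * g (e+1) := by rw [← hgc, ← mul_assoc, hhg, one_mul]
  unfold PV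
  rcases Nat.mod_two_eq_zero_or_one l.length with hl | hl
  · rw [al_par e (e+1) (l := 0) (by omega), al_par (e+1) e (l := 0) (by omega), al_zero, al_zero]
    obtain ⟨a, b⟩ := v
    obtain rfl : b = 0 := hw0 hl
    have key : ∀ k : ℕ, ((Lh (R := R) g h e * Lh (R := R) g h (e+1)) ^ k) (a, 0) = (c e ^ k * a, 0) := by
      intro k
      induction k with
      | zero => simp
      | succ k ih =>
        rw [pow_succ', Module.End.mul_apply, ih, Module.End.mul_apply, Lh_apply, Lh_apply]
        simp [hc, pow_succ', mul_assoc]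
    have : ∀ k ∈ Finset.range (m e + 1), p e k • ((Lh (R := R) g h e * Lh (R := R) g h (e+1)) ^ k) (a, 0)
       = LinearMap.inl R H H (LinearMap.mulRight R a (p e k • c e ^ k)) := by
      intro k _
      rw [key]; simp
    rw [Finset.sum_congr rfl this, ← map_sum, ← map_sum, hP, map_zero, map_zero]
  · rw [al_par e (e+1) (l := 1) (by omega), al_par (e+1) e (l := 1) (by omega), al_succ, al_zero,
      al_succ, al_zero]
    obtain ⟨a, b⟩ := v
    obtain rfl : a = 0 := hw1 hl
    have hc' : g (e+1) * h e = g e * c e * h e := by rw [hgc]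
    have key : ∀ k : ℕ, ((Lh (R := R) g h (e+1) * Lh (R := R) g h e) ^ k) (0, b) = (0, g e * c e ^ k * h e * b) := by
      intro k
      induction k with
      | zero => simp [hgh]
      | succ k ih =>
        rw [pow_succ', Module.End.mul_apply, ih, Module.End.mul_apply, Lh_apply, Lh_apply]
        simp only [mul_zero, Prod.mk.injEq, true_and]
        rw [← hgc, pow_succ']
        simp only [mul_assoc]
        rw [← mul_assoc (h e) (g e), hhg, one_mul]
    have : ∀ k ∈ Finset.range (m e + 1), p e k • ((Lh (R := R) g h (e+1) * Lh (R := R) g h e) ^ k) (0, b)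
       = LinearMap.inr R H H (LinearMap.mulRight R (h e * b) (LinearMap.mulLeft R (g e) (p e k • c e ^ k))) := by
      intro k _
      rw [key]; simp [mul_assoc]
    rw [Finset.sum_congr rfl this, ← map_sum, ← map_sum, ← map_sum, hP, map_zero, map_zero, map_zero]

theorem Lh_span (hgh : ∀ i, g i * h i = 1) (hhg : ∀ i, h i * g i = 1)
    (hgc : ∀ i, g i * c i = g (i+1)) (hgen : Algebra.adjoin R (Set.range c) = ⊤) (x : H) :
    ((x, 0) : H × H) ∈ Submodule.span R (Set.range (wop (Lh (R := R) g h) (1,0))) := by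
  set U := Submodule.span R (Set.range (wop (Lh (R := R) g h) ((1,0) : H × H))) with hU
  have hL : ∀ i, ∀ y ∈ U, Lh (R := R) g h i y ∈ U := by
    intro i
    have : U ≤ U.comap (Lh (R := R) g h i) := by
      rw [hU, Submodule.span_le]
      rintro _ ⟨l, rfl⟩
      exact Submodule.subset_span ⟨i :: l, rfl⟩
    exact this
  have hx : x ∈ Algebra.adjoin R (Set.range c) := by rw [hgen]; trivial
  have key : ∀ a : H, ((a, 0) : H × H) ∈ U → ((x * a, 0) : H × H) ∈ U := by
    induction hx using Algebra.adjoin_induction with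
    | mem y hy =>
      obtain ⟨e, rfl⟩ := hy
      intro a ha
      have := hL e _ (hL (e+1) _ ha)
      rw [Lh_apply, Lh_apply] at this
      simp only [mul_zero, ← mul_assoc] at this
      rwa [← hgc, ← mul_assoc, hhg, one_mul] at this
    | algebraMap r =>
      intro a ha
      have := U.smul_mem r ha
      rwa [Prod.smul_mk, smul_zero, Algebra.smul_def] at this
    | add y z _ _ hy hz =>
      intro a ha
      have := U.add_mem (hy a ha) (hz a ha)
      rwa [Prod.mk_add_mk, add_zero, ← add_mul] at this
    | mul y z _ _ hy hz =>
      intro a ha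
      rw [mul_assoc]
      exact hy _ (hz _ ha)
  have := key 1 (Submodule.subset_span ⟨[], rfl⟩)
  rwa [mul_one] at this

/-- packaged hypotheses on an algebra -/
structure Hyp (m : Fin (N+3) → ℕ) (p : Fin (N+3) → ℕ → R) (g h c : Fin (N+3) → H) : Prop where
  hm : ∀ j, 2 ≤ m j
  hp0 : ∀ e, IsUnit (p e 0)
  hpm : ∀ e, IsUnit (p e (m e))
  g0 : g 0 = 1
  hgh : ∀ i, g i * h i = 1
  hhg : ∀ i, h i * g i = 1
  hgc : ∀ i, g i * c i = g (i+1)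
  hP : ∀ e, ∑ a ∈ Finset.range (m e + 1), p e a • c e ^ a = 0
  hgen : Algebra.adjoin R (Set.range c) = ⊤

theorem Hyp.span (A : Hyp m p g h c) (X : Sys N m) (wd : X.W → List (Fin (N+3)))
    (hwd : ∀ w, wact X (wd w) = w ∧ Red X (wd w)) (x : H) :
    ((x, 0) : H × H) ∈ Submodule.span R (Set.range fun w => wop (Lh (R := R) g h) (1,0) (wd w)) := by
  have h1 := Lh_span (R := R) A.hgh A.hhg A.hgc A.hgen x
  have h2 := spanning (L := Lh (R := R) g h) (n0 := (1,0)) X A.hm A.hp0 A.hpm (Lh_inv A.hgh A.hhg)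
    (Lh_rel A.hgh A.hhg A.hgc A.hP) wd hwd
  refine Submodule.span_le.2 ?_ h1
  rintro _ ⟨l, rfl⟩
  exact h2 l

theorem Hyp.fin (A : Hyp m p g h c) (X : Sys N m) (B : ℕ) (hB : ∀ w, X.len w ≤ B) : Module.Finite R H := by
  choose wd hwd using fun w => exists_red X (X.len w) w rfl
  have hs := A.span X wd hwd
  have hf : (Set.range fun w => wop (Lh (R := R) g h) ((1,0) : H × H) (wd w)).Finite := by
    have : (Set.range wd).Finite := by
      refine (List.finite_length_le (Fin (N+3)) B).subset ?_
      rintro _ ⟨w, rfl⟩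
      have := (hwd w).2
      unfold Red at this
      rw [(hwd w).1] at this
      exact this.trans_le (hB w)
    have := this.image (wop (Lh (R := R) g h) ((1,0) : H × H))
    rwa [← Set.range_comp] at this
  refine Module.finite_def.2 (Submodule.fg_def.2 ⟨_, hf.image (LinearMap.fst R H H), ?_⟩)
  rw [eq_top_iff]
  intro x _
  rw [← Submodule.map_span]
  exact ⟨_, hs x, rfl⟩

end HH
end
end HF

namespace HF

noncomputable section
section free
variable {N : ℕ} {m : Fin (N+3) → ℕ} {X : Sys N m} {R H : Type} [CommRing R] [Ring H] [Algebra R H]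

theorem tri_indep (v : X.W → (X.W →₀ R))
    (hv : ∀ w, ∃ κ : Rˣ, v w - (κ:R) • tv X R w ∈ G X R (X.len w)) : LinearIndependent R v := by
  rw [linearIndependent_iff]
  intro a ha
  by_contra hne
  have hs : a.support.Nonempty := Finsupp.support_nonempty_iff.2 hne
  obtain ⟨w, hw, hmax⟩ := Finset.exists_max_image a.support X.len hs
  have hz : ∀ w', X.len w' ≤ X.len w → (v w' ) w = 0 ∨ w' = w := by
    intro w' hle
    by_cases hww : w' = w
    · exact Or.inr hww
    left
    obtain ⟨κ, hκ⟩ := hv w'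
    have h1 : (v w' - (κ:R) • tv X R w') w = 0 := by
      by_contra hc
      have := (Finsupp.mem_supported R _).1 hκ (Finsupp.mem_support_iff.2 hc)
      exact absurd this.1 (by simpa using hle)
    simpa [tv, Finsupp.single_apply, hww] using h1
  have h2 : ∃ κ : Rˣ, v w w = κ := by
    obtain ⟨κ, hκ⟩ := hv w
    refine ⟨κ, ?_⟩
    have h1 : (v w - (κ:R) • tv X R w) w = 0 := by
      by_contra hc
      have := (Finsupp.mem_supported R _).1 hκ (Finsupp.mem_support_iff.2 hc)
      exact absurd this.1 (by simp)
    simp [tv] at h1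
    exact sub_eq_zero.1 h1
  obtain ⟨κ, hκ⟩ := h2
  have h3 := congrArg (fun f => f w) ha
  simp only [Finsupp.linearCombination_apply, Finsupp.sum, Finsupp.coe_zero, Pi.zero_apply,
    Finsupp.finsetSum_apply, Finsupp.smul_apply, smul_eq_mul] at h3
  rw [Finset.sum_eq_single w] at h3
  · rw [hκ] at h3
    exact (Finsupp.mem_support_iff.1 hw) ((Units.mul_left_eq_zero κ).1 h3)
  · intro w' hw' hww
    rcases hz w' (hmax w' hw') with h | h
    · rw [h, mul_zero]
    · exact absurd h hww
  · intro h; exact absurd hw h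

variable (X R) in
def Ev (b : ℕ) : Submodule R (X.W →₀ R) := Finsupp.supported R R {w | (X.len w + b) % 2 = 0}

variable {p : Fin (N+3) → ℕ → R} {S : Fin (N+3) → X.W → (X.W →₀ R)}

theorem Ev_ind {M' : Type*} [AddCommGroup M'] [Module R M'] (f : (X.W →₀ R) →ₗ[R] M')
    (F : Submodule R M') {b : ℕ}
    (h : ∀ w, (X.len w + b) % 2 = 0 → f (tv X R w) ∈ F) : ∀ x ∈ Ev X R b, f x ∈ F := by
  intro x hx
  have : Ev X R b ≤ F.comap f := by
    unfold Ev
    rw [Finsupp.supported_eq_span_single, Submodule.span_le]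
    rintro _ ⟨w, hw, rfl⟩
    exact h w hw
  exact this hx

theorem Lx_Ev (h : ∀ n, Good p n S) (i : Fin (N+3)) (b : ℕ) :
    ∀ x ∈ Ev X R b, Lx S i x ∈ Ev X R (b+1) := by
  apply Ev_ind
  intro w hw
  rw [Lx_tv]
  have := (h (X.len w + 1)).val i w (by omega)
  revert this
  apply Finsupp.supported_mono
  rintro w' ⟨_, h2⟩
  simp only [Set.mem_ofPred_eq]
  omega

theorem Ev_two : Ev X R 2 = Ev X R 0 := by
  unfold Ev
  congr 1
  ext w
  simp

def Cop (h : ∀ n, Good p n S) (i j : Fin (N+3)) : Module.End R (Ev X R 0) :=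
  (Lx S i * Lx S j).restrict (p := Ev X R 0) (q := Ev X R 0) (fun x hx => by
    rw [← Ev_two]
    exact Lx_Ev h i 1 _ (Lx_Ev h j 0 x hx))

theorem Cop_apply (h : ∀ n, Good p n S) (i j : Fin (N+3)) (x : Ev X R 0) :
    (Cop h i j x : X.W →₀ R) = Lx S i (Lx S j x) := rfl

theorem Cop_mul (h : ∀ n, Good p n S) (i j k : Fin (N+3)) : Cop h i j * Cop h j k = Cop h i k := by
  ext1 x
  apply Subtype.ext
  rw [Module.End.mul_apply, Cop_apply, Cop_apply, Cop_apply, model_inv h]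

theorem Cop_self (h : ∀ n, Good p n S) (i : Fin (N+3)) : Cop h i i = 1 := by
  ext1 x
  apply Subtype.ext
  rw [Cop_apply, model_inv h]; rfl

theorem Cop_rel (h : ∀ n, Good p n S) (e : Fin (N+3)) :
    ∑ a ∈ Finset.range (m e + 1), p e a • (Cop h e (e+1)) ^ a = 0 := by
  ext1 x
  apply Subtype.ext
  obtain ⟨Q, hQ⟩ := PV_lin (p e) (m e) (Lx S e * Lx S (e+1))
  have h1 : Q (x : X.W →₀ R) ∈ (⊥ : Submodule R (X.W →₀ R)) := by
    refine Ev_ind (b := 0) Q ⊥ ?_ x x.2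
    intro w hw
    rw [← hQ]
    have := model_rel h e (X.len w) w rfl
    rwa [al_par e (e+1) (l := 0) (by omega), al_par (e+1) e (l := 0) (by omega), al_zero, al_zero] at this
  rw [Submodule.mem_bot, ← hQ] at h1
  have hpow : ∀ a : ℕ, (((Cop h e (e+1)) ^ a) x : X.W →₀ R) = ((Lx S e * Lx S (e+1)) ^ a) x := by
    intro a
    induction a with
    | zero => rfl
    | succ a ih => rw [pow_succ', pow_succ', Module.End.mul_apply, Module.End.mul_apply, Cop_apply, ih]; rfl
  rw [LinearMap.sum_apply, Submodule.coe_sum]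
  simp only [LinearMap.smul_apply, Submodule.coe_smul, hpow, LinearMap.zero_apply, ZeroMemClass.coe_zero]
  exact h1

variable {g h c : Fin (N+3) → H}

theorem Hyp.indep (A : Hyp m p g h c) (hS : ∀ n, Good p n S) (φ : H →ₐ[R] Module.End R (Ev X R 0))
    (hφ : ∀ e, φ (c e) = Cop hS e (e+1)) (wd : X.W → List (Fin (N+3)))
    (hwd : ∀ w, wact X (wd w) = w ∧ Red X (wd w)) :
    LinearIndependent R (fun w => wop (Lh (R := R) g h) (1,0) (wd w)) := by
  have hg : ∀ i, φ (g i) = Cop hS 0 i := by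
    intro i
    refine gseq_unique (fun e => Cop hS e (e+1)) (fun i => φ (g i)) (fun i => Cop hS 0 i) ?_ ?_ ?_ ?_ i
    · simp [A.g0]
    · intro i
      show φ (g i) * Cop hS i (i+1) = φ (g (i+1))
      rw [← A.hgc, map_mul, hφ]
    · exact Cop_self hS 0
    · intro i
      exact Cop_mul hS _ _ _
  have hh : ∀ i, φ (h i) = Cop hS i 0 := by
    intro i
    have h1 : φ (h i) * φ (g i) = 1 := by rw [← map_mul, A.hhg, map_one]
    have h2 : φ (g i) * Cop hS i 0 = 1 := by rw [hg, Cop_mul, Cop_self]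
    exact left_inv_eq_right_inv h1 h2
  let T : Ev X R 0 := ⟨tv X R X.one, Finsupp.single_mem_supported R 1 (by simp [X.len_one])⟩
  let ev : H →ₗ[R] (X.W →₀ R) := (Ev X R 0).subtype ∘ₗ (LinearMap.applyₗ T) ∘ₗ φ.toLinearMap
  have hev : ∀ a, ev a = (φ a T : X.W →₀ R) := fun a => rfl
  let Φ : (H × H) →ₗ[R] (X.W →₀ R) := LinearMap.coprod ev (Lx S 0 ∘ₗ ev)
  have hΦ : ∀ x : H × H, Φ x = ev x.1 + Lx S 0 (ev x.2) := fun x => by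
    simp [Φ]
  have hint : ∀ i x, Φ (Lh (R := R) g h i x) = Lx S i (Φ x) := by
    intro i x
    rw [hΦ, hΦ, Lh_apply]
    simp only [hev]
    rw [map_mul, map_mul, hg, hh, Module.End.mul_apply, Module.End.mul_apply, Cop_apply, Cop_apply,
      model_inv hS, map_add, add_comm]
  have hword : ∀ l, Φ (wop (Lh (R := R) g h) (1,0) l) = wop (Lx S) (tv X R X.one) l := by
    intro l
    induction l with
    | nil =>
      show Φ (1, 0) = tv X R X.one
      rw [hΦ, hev, map_one]
      simp [T]
    | cons i t ih =>
      show Φ (Lh (R := R) g h i (wop (Lh (R := R) g h) (1,0) t)) = Lx S i (wop (Lx S) (tv X R X.one) t)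
      rw [hint, ih]
  apply LinearIndependent.of_comp Φ
  apply tri_indep
  intro w
  obtain ⟨κ, hκ⟩ := word_lead hS (wd w) (hwd w).2
  refine ⟨κ, ?_⟩
  have hl : (wd w).length = X.len w := by
    have := (hwd w).2
    unfold Red at this
    rwa [(hwd w).1] at this
  rw [hl, (hwd w).1] at hκ
  rw [Function.comp_apply, hword]
  exact hκ

theorem Hyp.free (A : Hyp m p g h c) (X : Sys N m) (hT : X.Tri)
    (huniv : ∀ (E : Type) [AddCommGroup E] [Module R E] (C : Fin (N+3) → Module.End R E),
      (∀ e, ∑ a ∈ Finset.range (m e + 1), p e a • (C e) ^ a = 0) → (List.ofFn C).prod = 1 →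
      ∃ φ : H →ₐ[R] Module.End R E, ∀ e, φ (c e) = C e) : Module.Free R H := by
  obtain ⟨S, hS⟩ := model_exists X p A.hm hT A.hp0 A.hpm
  choose wd hwd using fun w => exists_red X (X.len w) w rfl
  obtain ⟨φ, hφ⟩ := huniv (Ev X R 0) (fun e => Cop hS e (e+1)) (Cop_rel hS)
    (prod_of_gseq _ (fun i => Cop hS 0 i) (Cop_self hS 0) (fun i => Cop_mul hS _ _ _))
  have hi := A.indep hS φ hφ wd hwd
  have hs := A.span X wd hwd
  have hl : ∀ w, (wd w).length = X.len w := by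
    intro w
    have := (hwd w).2
    unfold Red at this
    rwa [(hwd w).1] at this
  set e := fun w => wop (Lh (R := R) g h) ((1,0) : H × H) (wd w) with he
  let b : {w : X.W // X.len w % 2 = 0} → H := fun w => (e w.1).1
  have hb : ∀ w : {w : X.W // X.len w % 2 = 0}, LinearMap.inl R H H (b w) = e w.1 := by
    intro w
    apply Prod.ext
    · rfl
    · exact ((Lh_word (R := R) (g := g) (h := h) (wd w.1)).1 (by rw [hl]; exact w.2)).symm
  have hbi : LinearIndependent R b := by
    apply LinearIndependent.of_comp (LinearMap.inl R H H)
    have : (LinearMap.inl R H H) ∘ b = e ∘ Subtype.val := funext hb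
    rw [this]
    exact hi.comp _ Subtype.val_injective
  refine Module.Free.of_basis (Module.Basis.mk hbi ?_)
  intro x _
  have h1 := Submodule.mem_map_of_mem (f := LinearMap.fst R H H) (hs x)
  rw [Submodule.map_span] at h1
  refine Submodule.span_le.2 ?_ h1
  rintro _ ⟨_, ⟨w, rfl⟩, rfl⟩
  rcases Nat.mod_two_eq_zero_or_one (X.len w) with hw | hw
  · exact Submodule.subset_span ⟨⟨w, hw⟩, rfl⟩
  · have := (Lh_word (R := R) (g := g) (h := h) (wd w)).2 (by rw [hl]; exact hw)
    simp only [LinearMap.fst_apply, SetLike.mem_coe]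
    rw [he]
    simp only
    rw [this]
    exact zero_mem _

end free
end
end HF

namespace HF

noncomputable section
open Polynomial
section concrete
variable {r : ℕ} {m : Fin r → ℕ}

def lam (j : Fin r) (k : Fin (m j)) : HeckeBase r m :=
  Complex.exp (2 * Real.pi * Complex.I * ((k : ℕ) + 1) / (m j)) • qVar j k

theorem qVar_unit (j : Fin r) (k : Fin (m j)) : IsUnit (qVar j k : HeckeBase r m) := by
  refine IsUnit.of_mul_eq_one (AddMonoidAlgebra.single (Finsupp.single ⟨j, k⟩ (-1)) 1) ?_
  unfold qVar
  rw [AddMonoidAlgebra.single_mul_single, ← Finsupp.single_add]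
  simp [AddMonoidAlgebra.one_def]

theorem lam_unit (j : Fin r) (k : Fin (m j)) : IsUnit (lam j k : HeckeBase r m) := by
  unfold lam
  rw [Algebra.smul_def]
  exact ((isUnit_iff_ne_zero.2 (Complex.exp_ne_zero _)).map _).mul (qVar_unit j k)

def PP (m : Fin r → ℕ) (j : Fin r) : (HeckeBase r m)[X] := ∏ k : Fin (m j), (X - C (lam j k))

theorem PP_monic (j : Fin r) : (PP m j).Monic := monic_prod_of_monic _ _ fun _ _ => monic_X_sub_C _

theorem PP_deg (j : Fin r) : (PP m j).natDegree = m j := by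
  unfold PP
  rw [natDegree_prod_of_monic _ _ (fun _ _ => monic_X_sub_C _)]
  simp

theorem PP_top (j : Fin r) : (PP m j).coeff (m j) = 1 := by
  have := (PP_monic (m := m) j).coeff_natDegree
  rwa [PP_deg] at this

theorem PP_zero (j : Fin r) : IsUnit ((PP m j).coeff 0) := by
  unfold PP
  rw [coeff_zero_prod]
  apply IsUnit.prod_univ_iff.2
  intro k
  simp [lam_unit]

theorem PP_list {A : Type*} [Ring A] [Algebra (HeckeBase r m) A] (j : Fin r) (x : A) :
    (List.ofFn fun k : Fin (m j) => x - algebraMap (HeckeBase r m) A (lam j k)).prod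
      = aeval x (PP m j) := by
  unfold PP
  rw [← List.prod_ofFn, map_list_prod, List.map_ofFn]
  congr 2
  ext k
  simp

theorem PP_sum {A : Type*} [Ring A] [Algebra (HeckeBase r m) A] (j : Fin r) (x : A) :
    aeval x (PP m j) = ∑ a ∈ Finset.range (m j + 1), (PP m j).coeff a • x ^ a := by
  rw [aeval_eq_sum_range, PP_deg]

def cH (j : Fin r) : RingQuot (heckeRel r m) := RingQuot.mkAlgHom (HeckeBase r m) _ (FreeAlgebra.ι _ j)

theorem cH_rel (j : Fin r) : aeval (cH j : RingQuot (heckeRel r m)) (PP m j) = 0 := by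
  have h : heckeRel r m _ 0 := Or.inl ⟨j, rfl, rfl⟩
  have := RingQuot.mkAlgHom_rel (HeckeBase r m) h
  rw [map_zero, map_list_prod, List.map_ofFn] at this
  refine (PP_list j (cH j)).symm.trans (Eq.trans ?_ this)
  congr 2
  ext k
  simp [cH, lam]

theorem cH_prod : (List.ofFn fun j => (cH j : RingQuot (heckeRel r m))).prod = 1 := by
  have h : heckeRel r m _ 1 := Or.inr ⟨rfl, rfl⟩
  have := RingQuot.mkAlgHom_rel (HeckeBase r m) h
  rw [map_one, map_list_prod, List.map_ofFn] at this
  exact this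

theorem cH_lift {A : Type*} [Ring A] [Algebra (HeckeBase r m) A] (C : Fin r → A)
    (h1 : ∀ j, aeval (C j) (PP m j) = 0) (h2 : (List.ofFn C).prod = 1) :
    ∃ φ : RingQuot (heckeRel r m) →ₐ[HeckeBase r m] A, ∀ j, φ (cH j) = C j := by
  refine ⟨RingQuot.liftAlgHom (HeckeBase r m) ⟨FreeAlgebra.lift (HeckeBase r m) C, ?_⟩, fun j => ?_⟩
  · rintro a b (⟨j, rfl, rfl⟩ | ⟨rfl, rfl⟩)
    · rw [map_zero, map_list_prod, List.map_ofFn, ← h1 j, ← PP_list]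
      congr 2
      ext k
      simp [lam]
    · rw [map_one, map_list_prod, List.map_ofFn, ← h2]
      congr 2
      ext k
      simp
  · simp [cH]

theorem cH_gen : Algebra.adjoin (HeckeBase r m) (Set.range (cH : Fin r → RingQuot (heckeRel r m))) = ⊤ := by
  have : Set.range (cH : Fin r → RingQuot (heckeRel r m)) =
      RingQuot.mkAlgHom (HeckeBase r m) (heckeRel r m) '' Set.range (FreeAlgebra.ι (HeckeBase r m)) := by
    rw [← Set.range_comp]; rfl
  rw [this, ← AlgHom.map_adjoin, FreeAlgebra.adjoin_range_ι, Algebra.map_top, AlgHom.range_eq_top]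
  exact RingQuot.mkAlgHom_surjective _ _

theorem unit_of_PP {A : Type*} [Ring A] [Algebra (HeckeBase r m) A] (j : Fin r) (x : A)
    (h : aeval x (PP m j) = 0) : IsUnit x := by
  obtain ⟨u, hu⟩ := PP_zero (m := m) j
  have h1 := X_mul_divX_add (PP m j)
  have h2 := divX_mul_X_add (PP m j)
  rw [← hu] at h1 h2
  rw [← h1, map_add, map_mul, aeval_X, aeval_C] at h
  have hcomm : x * aeval x (PP m j).divX = aeval x (PP m j).divX * x := by
    have : aeval x (X * (PP m j).divX) = aeval x ((PP m j).divX * X) := by rw [mul_comm]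
    simpa using this
  have hv : IsUnit (x * aeval x (PP m j).divX) := by
    rw [eq_neg_of_add_eq_zero_left h]
    exact (u.isUnit.map _).neg
  exact ((show Commute x (aeval x (PP m j).divX) from hcomm).isUnit_mul_iff.1 hv).1

theorem cH_unit (j : Fin r) : IsUnit (cH j : RingQuot (heckeRel r m)) :=
  unit_of_PP j (cH j) (cH_rel (m := m) j)

end concrete

theorem hyp_H {N : ℕ} {m : Fin (N+3) → ℕ} (hm : ∀ j, 2 ≤ m j) :
    ∃ g h : Fin (N+3) → RingQuot (heckeRel (N+3) m), Hyp m (fun j a => (PP m j).coeff a) g h cH := by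
  obtain ⟨g, g0, hg⟩ := exists_gseq (fun j => (cH j : RingQuot (heckeRel (N+3) m))) cH_prod
  have hu : ∀ i, IsUnit (g i) := by
    intro i
    induction i using Fin.induction with
    | zero => rw [g0]; exact isUnit_one
    | succ i ih => rw [← Fin.coeSucc_eq_succ, ← hg]; exact ih.mul (cH_unit _)
  choose u hu using hu
  refine ⟨g, fun i => ((u i)⁻¹ : (RingQuot (heckeRel (N+3) m))ˣ), hm, fun e => PP_zero e, fun e => ?_, g0, ?_, ?_, hg, ?_, cH_gen⟩
  · simp only [PP_top]; exact isUnit_one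
  · intro i; rw [← hu]; simp
  · intro i; rw [← hu]; simp
  · intro e; rw [← PP_sum, cH_rel]

section eval
variable {r : ℕ} {m : Fin r → ℕ}

theorem exists_theta (t : Fin r → ℂˣ) : ∃ θ : HeckeBase r m →+* ℂ,
    ∀ j k, θ (lam j k) = Complex.exp (2 * Real.pi * Complex.I * ((k : ℕ) + 1) / (m j)) * t j := by
  let f : ((Σ j : Fin r, Fin (m j)) →₀ ℤ) →+ Additive ℂˣ :=
    Finsupp.liftAddHom (fun s => zmultiplesHom (Additive ℂˣ) (Additive.ofMul (t s.1)))
  let F : Multiplicative ((Σ j : Fin r, Fin (m j)) →₀ ℤ) →* ℂ :=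
    (Units.coeHom ℂ).comp (AddMonoidHom.toMultiplicativeLeft f)
  let Θ : HeckeBase r m →ₐ[ℂ] ℂ := AddMonoidAlgebra.lift ℂ ℂ _ F
  refine ⟨Θ, fun j k => ?_⟩
  have h1 : Θ (qVar j k) = t j := by
    simp [Θ, qVar, F, f]
  show Θ (lam j k) = _
  unfold lam
  rw [map_smul, h1, smul_eq_mul]

theorem theta_PP (hm : ∀ j, 2 ≤ m j) (t : Fin r → ℂˣ) (θ : HeckeBase r m →+* ℂ)
    (hθ : ∀ j k, θ (lam j k) = Complex.exp (2 * Real.pi * Complex.I * ((k : ℕ) + 1) / (m j)) * t j) (j : Fin r) :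
    (PP m j).map θ = X ^ (m j) - C ((t j : ℂ) ^ (m j)) := by
  have h0 : m j ≠ 0 := by have := hm j; omega
  have hz := Complex.isPrimitiveRoot_exp (m j) h0
  set ζ := Complex.exp (2 * Real.pi * Complex.I / (m j)) with hζ
  rw [X_pow_sub_C_eq_prod hz (Nat.pos_of_ne_zero h0) (α := ζ * t j) (by rw [mul_pow, hz.pow_eq_one, one_mul])]
  unfold PP
  rw [Polynomial.map_prod, Finset.prod_range]
  refine Finset.prod_congr rfl fun k _ => ?_
  rw [Polynomial.map_sub, map_X, map_C, hθ, ← mul_assoc, ← pow_succ, hζ, ← Complex.exp_nat_mul]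
  congr 4
  push_cast
  ring_nf

theorem theta_pow {A B : Type*} [Ring A] [Algebra (HeckeBase r m) A] [Ring B] [Algebra ℂ B] (hm : ∀ j, 2 ≤ m j)
    (t : Fin r → ℂˣ) (θ : HeckeBase r m →+* ℂ)
    (hθ : ∀ j k, θ (lam j k) = Complex.exp (2 * Real.pi * Complex.I * ((k : ℕ) + 1) / (m j)) * t j) (j : Fin r)
    (Ψ : A →+* B) (hΨ : ∀ a, Ψ (algebraMap _ A a) = algebraMap ℂ B (θ a)) (x : A) :
    Ψ (aeval x (PP m j)) = Ψ x ^ (m j) - algebraMap ℂ B ((t j : ℂ) ^ (m j)) := by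
  have h1 : Ψ (aeval x (PP m j)) = aeval (Ψ x) ((PP m j).map θ) := by
    rw [← PP_list, PP, Polynomial.map_prod, ← List.prod_ofFn, map_list_prod, map_list_prod, List.map_ofFn, List.map_ofFn]
    congr 2
    ext k
    simp [hΨ]
  rw [h1, theta_PP hm t θ hθ]
  simp

theorem H_nontrivial (hm : ∀ j, 2 ≤ m j) : Nontrivial (RingQuot (heckeRel r m)) := by
  obtain ⟨θ, hθ⟩ := exists_theta (m := m) (fun _ => 1)
  let _ : Algebra (HeckeBase r m) ℂ := θ.toAlgebra
  obtain ⟨φ, -⟩ := cH_lift (m := m) (A := ℂ) (fun _ => 1) (fun j => by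
    have := theta_pow (A := ℂ) (B := ℂ) hm _ θ hθ j (RingHom.id ℂ) (fun a => rfl) 1
    simpa using this) (by simp)
  exact φ.toRingHom.domain_nontrivial

theorem not_free (hr : 0 < r) (hm : ∀ j, 2 ≤ m j)
    (hfin : Module.Finite (HeckeBase r m) (RingQuot (heckeRel r m)))
    (hfree : Module.Free (HeckeBase r m) (RingQuot (heckeRel r m))) : False := by
  have := H_nontrivial hm
  let t : Fin r → ℂˣ := fun j => if j = ⟨0, hr⟩ then Units.mk0 2 (by norm_num) else 1
  obtain ⟨θ, hθ⟩ := exists_theta (m := m) t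
  let b := Module.Free.chooseBasis (HeckeBase r m) (RingQuot (heckeRel r m))
  classical
  let Ψ : RingQuot (heckeRel r m) →+* Matrix _ _ ℂ :=
    (θ.mapMatrix).comp (Algebra.leftMulMatrix b).toRingHom
  have hΨ : ∀ a, Ψ (algebraMap _ _ a) = algebraMap ℂ _ (θ a) := by
    intro a
    show θ.mapMatrix (Algebra.leftMulMatrix b (algebraMap _ _ a)) = _
    rw [AlgHom.commutes]
    ext i j
    simp [Matrix.algebraMap_matrix_apply, apply_ite θ]
  let n := Fintype.card (Module.Free.ChooseBasisIndex (HeckeBase r m) (RingQuot (heckeRel r m)))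
  have hn : n ≠ 0 := by
    have : Nonempty (Module.Free.ChooseBasisIndex (HeckeBase r m) (RingQuot (heckeRel r m))) := b.index_nonempty
    exact Fintype.card_ne_zero
  let d : Fin r → ℂ := fun j => (Ψ (cH j)).det
  have hd : ∀ j, d j ^ (m j) = ((t j : ℂ) ^ n) ^ (m j) := by
    intro j
    have := theta_pow hm t θ hθ j Ψ hΨ (cH j)
    rw [cH_rel, map_zero] at this
    have h2 := sub_eq_zero.1 this.symm
    have h3 := congrArg Matrix.det h2
    rw [Matrix.det_pow, Algebra.algebraMap_eq_smul_one, Matrix.det_smul, Matrix.det_one, mul_one] at h3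
    rw [pow_right_comm]
    exact h3
  have hprod : ∏ j, d j = 1 := by
    have := congrArg (fun x => Matrix.detMonoidHom (Ψ x)) (cH_prod (m := m))
    simp only [map_list_prod, map_one, List.map_ofFn] at this
    rw [← List.prod_ofFn]
    exact this
  let M := ∏ j, m j
  have hM : M ≠ 0 := Finset.prod_ne_zero_iff.2 fun j _ => by have := hm j; omega
  have hd' : ∀ j, d j ^ M = ((t j : ℂ) ^ n) ^ M := by
    intro j
    obtain ⟨q, hq⟩ : m j ∣ M := Finset.dvd_prod_of_mem _ (Finset.mem_univ j)
    rw [hq, pow_mul, hd, ← pow_mul]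
  have h1 : ∏ j, ((t j : ℂ) ^ n) ^ M = 1 := by
    rw [← Finset.prod_congr rfl (fun j _ => hd' j), Finset.prod_pow, hprod, one_pow]
  rw [Finset.prod_eq_single ⟨0, hr⟩] at h1
  · have h2 : ((2:ℂ) ^ n) ^ M = 1 := by simpa [t] using h1
    rw [← pow_mul] at h2
    have h3 : (2:ℕ) ^ (n * M) = 1 := by exact_mod_cast h2
    rw [Nat.pow_eq_one] at h3
    rcases h3 with h | h
    · omega
    · exact (Nat.mul_ne_zero hn hM) h
  · intro j _ hj
    simp [t, hj]
  · simp

end eval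
end
end HF

/-- **Etingof–Rains: algebraic flatness of Hecke algebras of polygonal Fuchsian groups.**
Let `r ≥ 3` and `m_j ≥ 2`.  The Hecke algebra `H` of the Fuchsian group `Γ(m₁,…,m_r)` —
the quotient of the free `R`-algebra on `c₁,…,c_r` (over the Laurent polynomial ring
`R = ℂ[q_{jk}^{±1}]`) by the two-sided ideal generated by the relations
`∏_{k=1}^{m_j}(c_j − e^{2πik/m_j} q_{jk}) = 0` and `c₁⋯c_r = 1` — is free as a left
`R`-module if and only if `Σ_j (1 − 1/m_j) ≥ 2`. -/
theorem hecke_fuchsian_flat_iff (r : ℕ) (hr : 3 ≤ r) (m : Fin r → ℕ)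
    (hm : ∀ j, 2 ≤ m j) :
    Module.Free (HeckeBase r m) (RingQuot (heckeRel r m)) ↔
      (2 : ℚ) ≤ ∑ j, (1 - 1 / (m j : ℚ)) := by
  obtain ⟨N, rfl⟩ : ∃ N, r = N + 3 := ⟨r - 3, by omega⟩
  obtain ⟨X, hX1, hX2⟩ := HF.exists_sys hm
  obtain ⟨g, h, A⟩ := HF.hyp_H hm
  constructor
  · intro hf
    by_contra hlt
    obtain ⟨B, hB⟩ := hX2 hlt
    exact HF.not_free (by omega) hm (A.fin X B hB) hf
  · intro hge
    refine A.free X (hX1 hge) ?_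
    intro E _ _ C h1 h2
    refine HF.cH_lift C (fun j => ?_) h2
    rw [HF.PP_sum]
    exact h1 j

end
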